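/- arXiv:2110.14640 — 4 statements merged into one kernel-verified Lean document; each statement's English description precedes it below -/
import Mathlib

section
/- Let N = 4, Ω ⊂ ℝ^4 a nonempty bounded open set, x₀ ∈ Ω, and a, b : ℝ^4 → ℝ continuous functions positive on the closure of Ω with a(x₀) = b(x₀) = γ₀ and γ₀ = min_{x∈Ω̄} a(x) = min_{x∈Ω̄} b(x). Suppose a admits the expansion of order k at x₀ with coefficient A_k > 0 and b admits the expansion of order l at x₀ with coefficient B_l > 0, where k = 2 and l > 2. Then for every λ > A₂ there exist smooth functions u, v compactly supported in Ω with ‖u‖_{L^q(Ω)} = ‖v‖_{L^q(Ω)} = 1 such that F_λ(u,v) < γ₀ S. -/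
open MeasureTheory Real Filter Topology

noncomputable section

/-!
The pair `(u, v)` is sought among truncated, `L⁴`-normalised bubbles centred at `x₀`, with scales
`ε` for `u` and `δ` for `v`. In dimension four the bubble `U_ε` just fails to be square integrable:
the integral of `U_ε²` over a fixed ball is of exact order `ε² log ε⁻¹`. Truncation and
normalisation change the energy level `γ₀ S` only by `O(ε²)`, the weight `a` costs
`O(ε² log ε⁻¹)` and the flatter weight `b` only `o(δ² log δ⁻¹)`, whereas for `ε ≤ δ` the coupling
`∫ u v` is at least `c ε δ log δ⁻¹`. Taking `ε = s δ`, the gain is linear in `s` and the cost of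
`u` quadratic, so a small fixed `s` makes the gain win as `δ → 0`, whatever `λ > 0` is.
-/

open Metric Module Asymptotics

section LogScale

lemma tendsto_log_inv_nhdsGT_zero : Tendsto (fun ε : ℝ ↦ log ε⁻¹) (𝓝[>] 0) atTop :=
  tendsto_log_atTop.comp tendsto_inv_nhdsGT_zero

lemma isLittleO_one_log_inv : (fun _ : ℝ ↦ (1 : ℝ)) =o[𝓝[>] 0] fun ε ↦ log ε⁻¹ :=
  isLittleO_const_left.2 <| .inr <| tendsto_norm_atTop_atTop.comp tendsto_log_inv_nhdsGT_zero

lemma isLittleO_sq_sq_mul_log_inv :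
    (fun ε : ℝ ↦ ε ^ 2) =o[𝓝[>] 0] fun ε ↦ ε ^ 2 * log ε⁻¹ := by
  simpa using (isBigO_refl (fun ε : ℝ ↦ ε ^ 2) (𝓝[>] 0)).mul_isLittleO isLittleO_one_log_inv

end LogScale

section Haar

variable {E : Type*} [NormedAddCommGroup E] [NormedSpace ℝ E] [FiniteDimensional ℝ E]
  [MeasurableSpace E] [BorelSpace E] {μ : Measure E} [μ.IsAddHaarMeasure] {x₀ : E}

lemma integral_comp_inv_smul_sub (f : E → ℝ) {ε : ℝ} (hε : 0 ≤ ε) :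
    ∫ x, f (ε⁻¹ • (x - x₀)) ∂μ = ε ^ finrank ℝ E * ∫ x, f x ∂μ := by
  rw [integral_sub_right_eq_self (fun x ↦ f (ε⁻¹ • x)) x₀,
    Measure.integral_comp_inv_smul_of_nonneg μ f hε, smul_eq_mul]

lemma setIntegral_closedBall_fun_norm_sub [Nontrivial E] (f : ℝ → ℝ) {r : ℝ} (hr : 0 ≤ r) :
    ∫ x in closedBall x₀ r, f ‖x - x₀‖ ∂μ
      = finrank ℝ E * μ.real (ball 0 1) * ∫ s in 0..r, s ^ (finrank ℝ E - 1) * f s := by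
  have hball : closedBall x₀ r = (fun x ↦ ‖x - x₀‖) ⁻¹' Set.Iic r := by
    ext x
    simp [dist_eq_norm]
  have hindicator (x : E) : (closedBall x₀ r).indicator (fun x ↦ f ‖x - x₀‖) x
      = (Set.Iic r).indicator f ‖x - x₀‖ := by
    rw [hball]
    exact Set.indicator_comp_right (g := f) fun x ↦ ‖x - x₀‖
  have hmul (s : ℝ) : s ^ (finrank ℝ E - 1) * (Set.Iic r).indicator f s
      = (Set.Iic r).indicator (fun s ↦ s ^ (finrank ℝ E - 1) * f s) s :=
    (Set.indicator_mul_right (Set.Iic r) (fun s ↦ s ^ (finrank ℝ E - 1)) f).symm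
  rw [← integral_indicator measurableSet_closedBall]
  simp_rw [hindicator]
  rw [integral_sub_right_eq_self (fun x : E ↦ (Set.Iic r).indicator f ‖x‖) x₀,
    integral_fun_norm_addHaar μ ((Set.Iic r).indicator f)]
  simp_rw [smul_eq_mul, nsmul_eq_mul, hmul]
  rw [setIntegral_indicator measurableSet_Iic, Set.Ioi_inter_Iic,
    ← intervalIntegral.integral_of_le hr, mul_assoc]

lemma integrableOn_inv_norm_sub_pow_compl_ball {r : ℝ} (hr : 0 < r) {p : ℕ}
    (hp : finrank ℝ E < p) :
    IntegrableOn (fun x ↦ (‖x - x₀‖ ^ p)⁻¹) (ball x₀ r)ᶜ μ := by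
  have hbracket : Integrable (fun x ↦ (1 + r⁻¹) ^ p * (1 + ‖x - x₀‖) ^ (-(p : ℝ))) μ :=
    ((integrable_one_add_norm (μ := μ) (by exact_mod_cast hp)).comp_sub_right x₀).const_mul _
  refine hbracket.integrableOn.mono' (by fun_prop) ?_
  refine ae_restrict_of_forall_mem measurableSet_ball.compl fun x hx ↦ ?_
  have hrx : r ≤ ‖x - x₀‖ := by simpa [dist_eq_norm] using hx
  have hx0 : 0 < ‖x - x₀‖ := hr.trans_le hrx
  have hle : 1 + ‖x - x₀‖ ≤ (1 + r⁻¹) * ‖x - x₀‖ := by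
    have := (one_le_div hr).2 hrx
    linarith [div_eq_inv_mul ‖x - x₀‖ r]
  rw [Real.norm_of_nonneg (by positivity), Real.rpow_neg (by positivity), Real.rpow_natCast,
    ← div_eq_mul_inv, ← one_div, div_le_div_iff₀ (by positivity) (by positivity), one_mul,
    ← mul_pow]
  gcongr

lemma isBigO_integral_sub_integral {f g : ℝ → E → ℝ} {C r : ℝ} (hr : 0 < r) {k p : ℕ}
    (hp : finrank ℝ E < p) (hf : ∀ ε > 0, Integrable (f ε) μ) (hg : ∀ ε > 0, Integrable (g ε) μ)
    (h_inside : ∀ ε > 0, Set.EqOn (f ε) (g ε) (ball x₀ r))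
    (h_outside : ∀ ε > 0, ∀ x ∉ ball x₀ r, |f ε x - g ε x| ≤ C * ε ^ k * (‖x - x₀‖ ^ p)⁻¹) :
    (fun ε ↦ ∫ x, f ε x ∂μ - ∫ x, g ε x ∂μ) =O[𝓝[>] 0] fun ε : ℝ ↦ ε ^ k := by
  refine IsBigO.of_bound (C * ∫ x in (ball x₀ r)ᶜ, (‖x - x₀‖ ^ p)⁻¹ ∂μ) ?_
  filter_upwards [self_mem_nhdsWithin] with ε (hε : 0 < ε)
  have h_zero (x : E) (hx : x ∉ (ball x₀ r)ᶜ) : f ε x - g ε x = 0 :=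
    sub_eq_zero.2 (h_inside ε hε (Set.notMem_compl_iff.1 hx))
  rw [← integral_sub (hf ε hε) (hg ε hε), ← setIntegral_eq_integral_of_forall_compl_eq_zero h_zero,
    Real.norm_of_nonneg (pow_nonneg hε.le k), mul_right_comm, ← integral_const_mul]
  exact norm_integral_le_of_norm_le
    ((integrableOn_inv_norm_sub_pow_compl_ball hr hp).const_mul _)
    (ae_restrict_of_forall_mem measurableSet_ball.compl fun x hx ↦ h_outside ε hε x hx)

end Haar

section Bubble

variable {E : Type*} [NormedAddCommGroup E] {x₀ x : E} {ε δ : ℝ}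

/-- The Aubin–Talenti bubble of a four-dimensional space, centred at `x₀` with scale `ε`: in
dimension `N` its exponent `(N - 2) / 2` is `1` for `N = 4`. -/
def bubble (x₀ : E) (ε : ℝ) (x : E) : ℝ := ε / (ε ^ 2 + ‖x - x₀‖ ^ 2)

lemma bubble_pos (hε : 0 < ε) : 0 < bubble x₀ ε x := by
  unfold bubble
  positivity

lemma bubble_le_div_norm_sq (hε : 0 ≤ ε) (hx : x ≠ x₀) : bubble x₀ ε x ≤ ε / ‖x - x₀‖ ^ 2 := by
  have : 0 < ‖x - x₀‖ := norm_sub_pos_iff.2 hx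
  unfold bubble
  gcongr
  exact le_add_of_nonneg_left (sq_nonneg ε)

lemma bubble_eq_inv_mul_bubble_inv_smul [NormedSpace ℝ E] (hε : 0 < ε) :
    bubble x₀ ε x = ε⁻¹ * bubble 0 1 (ε⁻¹ • (x - x₀)) := by
  have : 0 < ε ^ 2 + ‖x - x₀‖ ^ 2 := by positivity
  simp only [bubble, sub_zero, norm_smul, norm_inv, Real.norm_of_nonneg hε.le]
  field_simp

lemma div_mul_bubble_sq_le_bubble_mul_bubble (hε : 0 < ε) (hεδ : ε ≤ δ) :
    ε / δ * bubble x₀ δ x ^ 2 ≤ bubble x₀ ε x * bubble x₀ δ x := by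
  have hδ : 0 < δ := hε.trans_le hεδ
  unfold bubble
  calc ε / δ * (δ / (δ ^ 2 + ‖x - x₀‖ ^ 2)) ^ 2
      = ε / (δ ^ 2 + ‖x - x₀‖ ^ 2) * (δ / (δ ^ 2 + ‖x - x₀‖ ^ 2)) := by field_simp
    _ ≤ ε / (ε ^ 2 + ‖x - x₀‖ ^ 2) * (δ / (δ ^ 2 + ‖x - x₀‖ ^ 2)) := by gcongr

variable [InnerProductSpace ℝ E]

lemma contDiff_bubble {n : WithTop ℕ∞} (hε : 0 < ε) : ContDiff ℝ n (bubble x₀ ε) :=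
  contDiff_const.div (contDiff_const.add ((contDiff_id.sub contDiff_const).norm_sq ℝ))
    fun x ↦ by positivity

lemma norm_fderiv_bubble (hε : 0 < ε) :
    ‖fderiv ℝ (bubble x₀ ε) x‖ = 2 * ε * ‖x - x₀‖ / (ε ^ 2 + ‖x - x₀‖ ^ 2) ^ 2 := by
  have hden : ε ^ 2 + ‖x - x₀‖ ^ 2 ≠ 0 := by positivity
  have hnorm : HasFDerivAt (fun y ↦ ‖y - x₀‖ ^ 2) (2 • innerSL ℝ (x - x₀)) x := by
    simpa using ((hasFDerivAt_id x).sub_const x₀).norm_sq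
  have hbubble : HasFDerivAt (bubble x₀ ε) _ x :=
    ((hasDerivAt_inv hden).comp_hasFDerivAt x (hnorm.const_add (ε ^ 2))).const_mul ε
  rw [hbubble.fderiv, ← Nat.cast_smul_eq_nsmul ℝ]
  simp only [norm_smul, innerSL_apply_norm, norm_neg, norm_inv, norm_pow, Real.norm_eq_abs,
    abs_of_pos hε, Nat.cast_ofNat, abs_two,
    abs_of_nonneg (show 0 ≤ ε ^ 2 + ‖x - x₀‖ ^ 2 by positivity)]
  field_simp

lemma norm_sub_mul_norm_fderiv_bubble_le (hε : 0 < ε) :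
    ‖x - x₀‖ * ‖fderiv ℝ (bubble x₀ ε) x‖ ≤ 2 * bubble x₀ ε x := by
  rw [norm_fderiv_bubble hε, bubble, mul_div_assoc', mul_div_assoc',
    div_le_div_iff₀ (by positivity) (by positivity)]
  have : 0 ≤ 2 * ε ^ 3 * (ε ^ 2 + ‖x - x₀‖ ^ 2) := by positivity
  linarith

lemma norm_fderiv_bubble_eq_inv_sq_mul (hε : 0 < ε) :
    ‖fderiv ℝ (bubble x₀ ε) x‖
      = (ε ^ 2)⁻¹ * ‖fderiv ℝ (bubble (0 : E) 1) (ε⁻¹ • (x - x₀))‖ := by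
  have : 0 < ε ^ 2 + ‖x - x₀‖ ^ 2 := by positivity
  simp only [norm_fderiv_bubble hε, norm_fderiv_bubble one_pos, sub_zero, norm_smul, norm_inv,
    Real.norm_of_nonneg hε.le]
  field_simp

end Bubble

section BubbleIntegrals

variable {E : Type*} [NormedAddCommGroup E] [InnerProductSpace ℝ E] [FiniteDimensional ℝ E]
  [MeasurableSpace E] [BorelSpace E] {x₀ : E} {ε : ℝ}

lemma integrable_bubble_pow_four (hE : finrank ℝ E = 4) (hε : 0 < ε) :
    Integrable (fun x ↦ bubble x₀ ε x ^ 4) := by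
  have hstd : Integrable (fun y : E ↦ bubble 0 1 y ^ 4) := by
    refine (integrable_rpow_neg_one_add_norm_sq (μ := volume) (E := E) (r := 8)
      (by rw [hE]; norm_num)).congr (.of_forall fun y ↦ ?_)
    simp only [bubble, sub_zero, one_pow, one_div, inv_pow, neg_div]
    rw [rpow_neg (by positivity), ← rpow_natCast]
    norm_num
  refine (((hstd.comp_smul (inv_ne_zero hε.ne')).comp_sub_right x₀).const_mul (ε⁻¹ ^ 4)).congr
    (.of_forall fun x ↦ ?_)
  simp only [bubble_eq_inv_mul_bubble_inv_smul (x₀ := x₀) hε, mul_pow]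

lemma integral_bubble_pow_four (hE : finrank ℝ E = 4) (hε : 0 < ε) :
    ∫ x, bubble x₀ ε x ^ 4 = ∫ y : E, bubble 0 1 y ^ 4 := by
  simp_rw [bubble_eq_inv_mul_bubble_inv_smul (x₀ := x₀) hε, mul_pow]
  rw [integral_const_mul, integral_comp_inv_smul_sub (fun y ↦ bubble 0 1 y ^ 4) hε.le, hE]
  field_simp

lemma integrable_norm_fderiv_bubble_sq (hE : finrank ℝ E = 4) (hε : 0 < ε) :
    Integrable (fun x ↦ ‖fderiv ℝ (bubble x₀ ε) x‖ ^ 2) := by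
  have hstd : Integrable (fun y : E ↦ ‖fderiv ℝ (bubble (0 : E) 1) y‖ ^ 2) := by
    have hdom : Integrable (fun y : E ↦ 4 * (1 + ‖y‖ ^ 2) ^ (-(6 : ℝ) / 2)) :=
      (integrable_rpow_neg_one_add_norm_sq (by rw [hE]; norm_num)).const_mul 4
    have hcont := (contDiff_bubble (x₀ := (0 : E)) (n := 1) one_pos).continuous_fderiv one_ne_zero
    refine hdom.mono' (hcont.norm.pow 2).aestronglyMeasurable (.of_forall fun y ↦ ?_)
    have hpow : (1 + ‖y‖ ^ 2) ^ (-(6 : ℝ) / 2) = ((1 + ‖y‖ ^ 2) ^ 3)⁻¹ := by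
      rw [neg_div, rpow_neg (by positivity), ← rpow_natCast]
      norm_num
    rw [norm_of_nonneg (by positivity), norm_fderiv_bubble one_pos, sub_zero, hpow, div_pow,
      ← div_eq_mul_inv, div_le_div_iff₀ (by positivity) (by positivity)]
    have : 0 ≤ 4 * (1 + ‖y‖ ^ 2) ^ 3 := by positivity
    linarith
  refine (((hstd.comp_smul (inv_ne_zero hε.ne')).comp_sub_right x₀).const_mul
    ((ε ^ 2)⁻¹ ^ 2)).congr (.of_forall fun x ↦ ?_)
  simp only [norm_fderiv_bubble_eq_inv_sq_mul (x₀ := x₀) hε, mul_pow]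

lemma integral_norm_fderiv_bubble_sq (hE : finrank ℝ E = 4) (hε : 0 < ε) :
    ∫ x, ‖fderiv ℝ (bubble x₀ ε) x‖ ^ 2 = ∫ y : E, ‖fderiv ℝ (bubble (0 : E) 1) y‖ ^ 2 := by
  simp_rw [norm_fderiv_bubble_eq_inv_sq_mul (x₀ := x₀) hε, mul_pow]
  rw [integral_const_mul,
    integral_comp_inv_smul_sub (fun y ↦ ‖fderiv ℝ (bubble (0 : E) 1) y‖ ^ 2) hε.le, hE]
  field_simp

lemma integral_bubble_pow_four_pos (hE : finrank ℝ E = 4) : 0 < ∫ y : E, bubble 0 1 y ^ 4 := by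
  have hcont : Continuous (fun y : E ↦ bubble 0 1 y ^ 4) :=
    (contDiff_bubble (n := 0) one_pos).continuous.pow 4
  refine integral_pos_of_integrable_nonneg_nonzero (x := 0) hcont
    (integrable_bubble_pow_four hE one_pos) (fun y ↦ ?_) ?_
  · exact (pow_pos (bubble_pos one_pos) 4).le
  · exact (pow_pos (bubble_pos one_pos) 4).ne'

lemma integral_pow_three_mul_bubble_profile_sq (hε : 0 < ε) (r : ℝ) :
    ∫ s in 0..r, s ^ 3 * (ε / (ε ^ 2 + s ^ 2)) ^ 2
      = ε ^ 2 * log ε⁻¹ + ε ^ 2 / 2 * (log (ε ^ 2 + r ^ 2) + ε ^ 2 / (ε ^ 2 + r ^ 2) - 1) := by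
  have hpos (s : ℝ) : 0 < ε ^ 2 + s ^ 2 := by positivity
  have hderiv (s : ℝ) : HasDerivAt
      (fun s ↦ ε ^ 2 / 2 * (log (ε ^ 2 + s ^ 2) + ε ^ 2 * (ε ^ 2 + s ^ 2)⁻¹))
      (s ^ 3 * (ε / (ε ^ 2 + s ^ 2)) ^ 2) s := by
    have hden : HasDerivAt (fun s ↦ ε ^ 2 + s ^ 2) (2 * s) s := by
      simpa using (hasDerivAt_pow 2 s).const_add (ε ^ 2)
    refine (((hden.log (hpos s).ne').add ((hden.inv (hpos s).ne').const_mul (ε ^ 2))).const_mul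
      (ε ^ 2 / 2)).congr_deriv ?_
    have := (hpos s).ne'
    field_simp
    ring
  have hcont : Continuous fun s ↦ s ^ 3 * (ε / (ε ^ 2 + s ^ 2)) ^ 2 :=
    (continuous_pow 3).mul ((continuous_const.div (by fun_prop) fun s ↦ (hpos s).ne').pow 2)
  rw [intervalIntegral.integral_eq_sub_of_hasDerivAt (fun s _ ↦ hderiv s)
    (hcont.intervalIntegrable 0 r), zero_pow two_ne_zero, add_zero, log_pow, log_inv]
  have := (hpos r).ne'
  field_simp
  ring

lemma isTheta_setIntegral_bubble_sq (hE : finrank ℝ E = 4) {r : ℝ} (hr : 0 < r) :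
    (fun ε ↦ ∫ x in closedBall x₀ r, bubble x₀ ε x ^ 2)
      =Θ[𝓝[>] 0] fun ε ↦ ε ^ 2 * log ε⁻¹ := by
  have : Nontrivial E := nontrivial_of_finrank_pos (R := ℝ) (by omega)
  set ω : ℝ := (volume : Measure E).real (ball 0 1)
  have hω : 4 * ω ≠ 0 :=
    mul_ne_zero four_ne_zero (ENNReal.toReal_pos (measure_ball_pos _ _ one_pos).ne'
      measure_ball_lt_top.ne).ne'
  let remainder (ε : ℝ) : ℝ := log (ε ^ 2 + r ^ 2) + ε ^ 2 / (ε ^ 2 + r ^ 2) - 1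
  have hremainder : remainder =O[𝓝[>] 0] fun _ ↦ (1 : ℝ) := by
    have hcont : ContinuousAt remainder 0 := by
      have : (0 : ℝ) ^ 2 + r ^ 2 ≠ 0 := by positivity
      fun_prop (disch := assumption)
    exact (hcont.tendsto.mono_left nhdsWithin_le_nhds).isBigO_one ℝ
  have hexact : (fun ε ↦ ∫ x in closedBall x₀ r, bubble x₀ ε x ^ 2)
      =ᶠ[𝓝[>] 0] fun ε ↦ 4 * ω * (ε ^ 2 * log ε⁻¹ + ε ^ 2 / 2 * remainder ε) := by
    filter_upwards [self_mem_nhdsWithin] with ε (hε : 0 < ε)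
    rw [← integral_pow_three_mul_bubble_profile_sq hε]
    simpa [hE, ω, bubble] using
      setIntegral_closedBall_fun_norm_sub (μ := volume) (x₀ := x₀)
        (fun s ↦ (ε / (ε ^ 2 + s ^ 2)) ^ 2) hr.le
  have hsmall : (fun ε ↦ ε ^ 2 / 2 * remainder ε) =o[𝓝[>] 0] fun ε ↦ ε ^ 2 * log ε⁻¹ := by
    refine IsBigO.trans_isLittleO ?_ isLittleO_sq_sq_mul_log_inv
    simpa [div_eq_inv_mul, mul_assoc] using
      ((isBigO_refl (fun ε : ℝ ↦ ε ^ 2) (𝓝[>] 0)).mul hremainder).const_mul_left 2⁻¹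
  exact hexact.trans_isTheta ((isTheta_const_mul_left hω).2 (isTheta_rfl.add_isLittleO hsmall))

end BubbleIntegrals

section TruncatedBubble

variable {E : Type*} [NormedAddCommGroup E] {x₀ x : E}

lemma exists_contDiffBump_closedBall_subset {s : Set E} (hs : s ∈ 𝓝 x₀) :
    ∃ φ : ContDiffBump x₀, closedBall x₀ φ.rOut ⊆ s := by
  obtain ⟨r, hr, hrs⟩ := nhds_basis_closedBall.mem_iff.1 hs
  exact ⟨⟨r / 2, r, half_pos hr, half_lt_self hr⟩, hrs⟩

variable [InnerProductSpace ℝ E] [FiniteDimensional ℝ E] (φ : ContDiffBump x₀) {ε : ℝ}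

/-- The bubble at the centre of the cutoff `φ`, multiplied by `φ`. -/
def truncatedBubble (ε : ℝ) (x : E) : ℝ := φ x * bubble x₀ ε x

lemma contDiff_truncatedBubble {n : ℕ∞} (hε : 0 < ε) : ContDiff ℝ n (truncatedBubble φ ε) :=
  φ.contDiff.mul (contDiff_bubble hε)

lemma continuous_truncatedBubble (hε : 0 < ε) : Continuous (truncatedBubble φ ε) :=
  (contDiff_truncatedBubble φ (n := 0) hε).continuous

lemma tsupport_truncatedBubble_subset : tsupport (truncatedBubble φ ε) ⊆ closedBall x₀ φ.rOut :=
  (tsupport_mul_subset_left (g := bubble x₀ ε)).trans φ.tsupport_eq.subset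

lemma hasCompactSupport_truncatedBubble : HasCompactSupport (truncatedBubble φ ε) :=
  φ.hasCompactSupport.mul_right (f' := bubble x₀ ε)

lemma truncatedBubble_nonneg (hε : 0 < ε) : 0 ≤ truncatedBubble φ ε x :=
  mul_nonneg φ.nonneg (bubble_pos hε).le

lemma truncatedBubble_le_bubble (hε : 0 < ε) : truncatedBubble φ ε x ≤ bubble x₀ ε x :=
  mul_le_of_le_one_left (bubble_pos hε).le φ.le_one

lemma truncatedBubble_eq_bubble (hx : x ∈ closedBall x₀ φ.rIn) :
    truncatedBubble φ ε x = bubble x₀ ε x := by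
  rw [truncatedBubble, φ.one_of_mem_closedBall hx, one_mul]

lemma fderiv_truncatedBubble_eq_fderiv_bubble (hx : x ∈ ball x₀ φ.rIn) :
    fderiv ℝ (truncatedBubble φ ε) x = fderiv ℝ (bubble x₀ ε) x := by
  refine EventuallyEq.fderiv_eq ?_
  filter_upwards [isOpen_ball.mem_nhds hx] with y hy
  exact truncatedBubble_eq_bubble φ (ball_subset_closedBall hy)

lemma fderiv_truncatedBubble_of_notMem_closedBall (hx : x ∉ closedBall x₀ φ.rOut) :
    fderiv ℝ (truncatedBubble φ ε) x = 0 :=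
  fderiv_of_notMem_tsupport (𝕜 := ℝ) fun h ↦ hx (tsupport_truncatedBubble_subset φ h)

lemma exists_norm_sub_mul_norm_fderiv_truncatedBubble_le :
    ∃ C ≥ 0, ∀ ε > 0, ∀ x, ‖x - x₀‖ * ‖fderiv ℝ (truncatedBubble φ ε) x‖ ≤ C * bubble x₀ ε x := by
  obtain ⟨M, hM⟩ := ((φ.contDiff (n := 1)).continuous_fderiv
    one_ne_zero).bounded_above_of_compact_support (φ.hasCompactSupport.fderiv ℝ)
  have hM0 : 0 ≤ M := (norm_nonneg _).trans (hM x₀)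
  refine ⟨2 + φ.rOut * M, by have := φ.rOut_pos; positivity, fun ε hε x ↦ ?_⟩
  have hU : 0 ≤ bubble x₀ ε x := (bubble_pos hε).le
  by_cases hx : x ∈ closedBall x₀ φ.rOut
  · have hleibniz : fderiv ℝ (truncatedBubble φ ε) x
        = φ x • fderiv ℝ (bubble x₀ ε) x + bubble x₀ ε x • fderiv ℝ φ x :=
      fderiv_mul (φ.contDiff.differentiable one_ne_zero x)
        ((contDiff_bubble hε).differentiable one_ne_zero x)
    have hnorm : ‖fderiv ℝ (truncatedBubble φ ε) x‖
        ≤ ‖fderiv ℝ (bubble x₀ ε) x‖ + bubble x₀ ε x * M := by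
      rw [hleibniz]
      refine (norm_add_le _ _).trans (add_le_add ?_ ?_)
      · rw [norm_smul, norm_of_nonneg φ.nonneg]
        exact mul_le_of_le_one_left (norm_nonneg _) φ.le_one
      · rw [norm_smul, norm_of_nonneg hU]
        gcongr
        exact hM x
    calc ‖x - x₀‖ * ‖fderiv ℝ (truncatedBubble φ ε) x‖
        ≤ ‖x - x₀‖ * ‖fderiv ℝ (bubble x₀ ε) x‖ + ‖x - x₀‖ * (bubble x₀ ε x * M) := by
          rw [← mul_add]; gcongr
      _ ≤ 2 * bubble x₀ ε x + φ.rOut * (bubble x₀ ε x * M) := by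
          have hx' : ‖x - x₀‖ ≤ φ.rOut := by simpa [dist_eq_norm] using hx
          exact add_le_add (norm_sub_mul_norm_fderiv_bubble_le hε)
            (mul_le_mul_of_nonneg_right hx' (by positivity))
      _ = (2 + φ.rOut * M) * bubble x₀ ε x := by ring
  · rw [fderiv_truncatedBubble_of_notMem_closedBall φ hx, norm_zero, mul_zero]
    have := φ.rOut_pos
    positivity

variable [MeasurableSpace E] [BorelSpace E]

lemma integrable_norm_fderiv_truncatedBubble_sq (hε : 0 < ε) :
    Integrable (fun x ↦ ‖fderiv ℝ (truncatedBubble φ ε) x‖ ^ 2) := by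
  have hcont : Continuous (fderiv ℝ (truncatedBubble φ ε)) :=
    (contDiff_truncatedBubble φ (n := 1) hε).continuous_fderiv one_ne_zero
  have hsupp : HasCompactSupport (fun x ↦ ‖fderiv ℝ (truncatedBubble φ ε) x‖ ^ 2) :=
    ((hasCompactSupport_truncatedBubble φ).fderiv ℝ).comp_left (g := (‖·‖ ^ 2)) (by simp)
  exact (hcont.norm.pow 2).integrable_of_hasCompactSupport hsupp

lemma integrable_truncatedBubble_pow_four (hε : 0 < ε) :
    Integrable (fun x ↦ truncatedBubble φ ε x ^ 4) := by
  have hsupp : HasCompactSupport (fun x ↦ truncatedBubble φ ε x ^ 4) :=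
    (hasCompactSupport_truncatedBubble φ).comp_left (g := (· ^ 4)) (by simp)
  exact (continuous_truncatedBubble φ hε).pow 4 |>.integrable_of_hasCompactSupport hsupp

lemma integral_truncatedBubble_pow_four_pos (hε : 0 < ε) :
    0 < ∫ x, truncatedBubble φ ε x ^ 4 := by
  refine integral_pos_of_integrable_nonneg_nonzero (x := x₀)
    ((continuous_truncatedBubble φ hε).pow 4)
    (integrable_truncatedBubble_pow_four φ hε)
    (fun x ↦ pow_nonneg (truncatedBubble_nonneg φ hε) 4) (pow_ne_zero 4 ?_)
  rw [truncatedBubble_eq_bubble φ (mem_closedBall_self φ.rIn_pos.le)]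
  exact (bubble_pos hε).ne'

lemma isBigO_integral_truncatedBubble_pow_four_sub (hE : finrank ℝ E = 4) :
    (fun ε ↦ (∫ x, truncatedBubble φ ε x ^ 4) - ∫ y : E, bubble 0 1 y ^ 4)
      =O[𝓝[>] 0] fun ε ↦ ε ^ 4 := by
  have houtside (ε : ℝ) (hε : ε > 0) (x : E) (hx : x ∉ ball x₀ φ.rIn) :
      |truncatedBubble φ ε x ^ 4 - bubble x₀ ε x ^ 4| ≤ 1 * ε ^ 4 * (‖x - x₀‖ ^ 8)⁻¹ := by
    have hx₀ : x ≠ x₀ := (ne_of_mem_of_not_mem (mem_ball_self φ.rIn_pos) hx).symm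
    have hw : 0 ≤ truncatedBubble φ ε x := truncatedBubble_nonneg φ hε
    have hU : 0 ≤ bubble x₀ ε x := (bubble_pos hε).le
    calc |truncatedBubble φ ε x ^ 4 - bubble x₀ ε x ^ 4|
        ≤ bubble x₀ ε x ^ 4 :=
          abs_sub_le_of_nonneg_of_le (pow_nonneg hw 4)
            (pow_le_pow_left₀ hw (truncatedBubble_le_bubble φ hε) 4) (pow_nonneg hU 4) le_rfl
      _ ≤ (ε / ‖x - x₀‖ ^ 2) ^ 4 := pow_le_pow_left₀ hU (bubble_le_div_norm_sq hε.le hx₀) 4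
      _ = 1 * ε ^ 4 * (‖x - x₀‖ ^ 8)⁻¹ := by rw [div_pow]; ring
  refine (isBigO_integral_sub_integral (μ := volume) φ.rIn_pos (by omega)
    (fun ε ↦ integrable_truncatedBubble_pow_four φ) (fun ε ↦ integrable_bubble_pow_four hE)
    (fun ε _ x hx ↦ ?_) houtside).congr' ?_ .rfl
  · simp only [truncatedBubble_eq_bubble φ (ball_subset_closedBall hx)]
  · filter_upwards [self_mem_nhdsWithin] with ε hε
    rw [integral_bubble_pow_four hE hε]

lemma isBigO_integral_norm_fderiv_truncatedBubble_sq_sub (hE : finrank ℝ E = 4) :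
    (fun ε ↦ (∫ x, ‖fderiv ℝ (truncatedBubble φ ε) x‖ ^ 2)
        - ∫ y : E, ‖fderiv ℝ (bubble (0 : E) 1) y‖ ^ 2) =O[𝓝[>] 0] fun ε ↦ ε ^ 2 := by
  obtain ⟨C, -, hgrad⟩ := exists_norm_sub_mul_norm_fderiv_truncatedBubble_le φ
  have houtside (ε : ℝ) (hε : ε > 0) (x : E) (hx : x ∉ ball x₀ φ.rIn) :
      |‖fderiv ℝ (truncatedBubble φ ε) x‖ ^ 2 - ‖fderiv ℝ (bubble x₀ ε) x‖ ^ 2|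
        ≤ max C 2 ^ 2 * ε ^ 2 * (‖x - x₀‖ ^ 6)⁻¹ := by
    have hx₀ : x ≠ x₀ := (ne_of_mem_of_not_mem (mem_ball_self φ.rIn_pos) hx).symm
    have hpos : 0 < ‖x - x₀‖ := norm_sub_pos_iff.2 hx₀
    have hdecay {t C' : ℝ} (ht : 0 ≤ t) (hC' : C' ≤ max C 2)
        (h : ‖x - x₀‖ * t ≤ C' * bubble x₀ ε x) :
        t ^ 2 ≤ max C 2 ^ 2 * ε ^ 2 * (‖x - x₀‖ ^ 6)⁻¹ := by
      have hle : ‖x - x₀‖ * t ≤ max C 2 * (ε / ‖x - x₀‖ ^ 2) :=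
        h.trans (mul_le_mul hC' (bubble_le_div_norm_sq hε.le hx₀) (bubble_pos hε).le
          (by positivity))
      calc t ^ 2 ≤ (max C 2 * (ε / ‖x - x₀‖ ^ 2) / ‖x - x₀‖) ^ 2 :=
            pow_le_pow_left₀ ht ((le_div_iff₀' hpos).2 hle) 2
        _ = max C 2 ^ 2 * ε ^ 2 * (‖x - x₀‖ ^ 6)⁻¹ := by field_simp
    exact abs_sub_le_of_nonneg_of_le (by positivity)
      (hdecay (norm_nonneg _) (le_max_left C 2) (hgrad ε hε x)) (by positivity)
      (hdecay (norm_nonneg _) (le_max_right C 2) (norm_sub_mul_norm_fderiv_bubble_le hε))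
  refine (isBigO_integral_sub_integral (μ := volume) φ.rIn_pos (by omega)
    (fun ε ↦ integrable_norm_fderiv_truncatedBubble_sq φ)
    (fun ε ↦ integrable_norm_fderiv_bubble_sq hE) (fun ε _ x hx ↦ ?_) houtside).congr' ?_ .rfl
  · simp only [fderiv_truncatedBubble_eq_fderiv_bubble φ hx]
  · filter_upwards [self_mem_nhdsWithin] with ε hε
    rw [integral_norm_fderiv_bubble_sq hE hε]

end TruncatedBubble

section WeightedDirichletIntegral

variable {E : Type*} [NormedAddCommGroup E] [InnerProductSpace ℝ E] [FiniteDimensional ℝ E]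
  {x₀ : E} {φ : ContDiffBump x₀} {f : E → ℝ} {M : ℝ}

lemma exists_abs_mul_norm_fderiv_truncatedBubble_sq_le
    (hfM : ∀ x ∈ closedBall x₀ φ.rOut, |f x| ≤ M) :
    ∃ C, ∀ κ ≥ 0, (∀ᶠ x in 𝓝 x₀, |f x| ≤ κ * ‖x - x₀‖ ^ 2) →
      ∃ K, ∀ ε > 0, ∀ x ∈ closedBall x₀ φ.rOut,
        |f x| * ‖fderiv ℝ (truncatedBubble φ ε) x‖ ^ 2 ≤ C * κ * bubble x₀ ε x ^ 2 + K * ε ^ 2 := by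
  obtain ⟨C, hC₀, hgrad⟩ := exists_norm_sub_mul_norm_fderiv_truncatedBubble_le φ
  have hM : 0 ≤ M := (abs_nonneg _).trans (hfM x₀ (mem_closedBall_self φ.rOut_pos.le))
  refine ⟨C ^ 2, fun κ hκ hfκ ↦ ?_⟩
  obtain ⟨ρ, hρ, hball⟩ := Metric.eventually_nhds_iff_ball.1 hfκ
  refine ⟨M * (C / ρ ^ 3) ^ 2, fun ε hε x hx ↦ ?_⟩
  set t : ℝ := ‖fderiv ℝ (truncatedBubble φ ε) x‖
  by_cases hxρ : x ∈ ball x₀ ρ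
  · calc |f x| * t ^ 2 ≤ κ * ‖x - x₀‖ ^ 2 * t ^ 2 := by
          gcongr
          exact hball x hxρ
      _ = κ * (‖x - x₀‖ * t) ^ 2 := by ring
      _ ≤ κ * (C * bubble x₀ ε x) ^ 2 :=
          mul_le_mul_of_nonneg_left (pow_le_pow_left₀ (by positivity) (hgrad ε hε x) 2) hκ
      _ = C ^ 2 * κ * bubble x₀ ε x ^ 2 := by ring
      _ ≤ C ^ 2 * κ * bubble x₀ ε x ^ 2 + M * (C / ρ ^ 3) ^ 2 * ε ^ 2 :=
          le_add_of_nonneg_right (by positivity)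
  · have hρx : ρ ≤ ‖x - x₀‖ := by simpa [dist_eq_norm] using hxρ
    have hpos : 0 < ‖x - x₀‖ := hρ.trans_le hρx
    have ht : t ≤ C / ρ ^ 3 * ε := calc
      t ≤ C * bubble x₀ ε x / ‖x - x₀‖ := (le_div_iff₀' hpos).2 (hgrad ε hε x)
      _ ≤ C * (ε / ‖x - x₀‖ ^ 2) / ‖x - x₀‖ := by
          gcongr
          exact bubble_le_div_norm_sq hε.le (norm_sub_pos_iff.1 hpos)
      _ = C / ‖x - x₀‖ ^ 3 * ε := by field_simp
      _ ≤ C / ρ ^ 3 * ε := by gcongr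
    calc |f x| * t ^ 2 ≤ M * (C / ρ ^ 3 * ε) ^ 2 := by
          gcongr
          exact hfM x hx
      _ = M * (C / ρ ^ 3) ^ 2 * ε ^ 2 := by ring
      _ ≤ C ^ 2 * κ * bubble x₀ ε x ^ 2 + M * (C / ρ ^ 3) ^ 2 * ε ^ 2 :=
          le_add_of_nonneg_left (by positivity)

variable [MeasurableSpace E] [BorelSpace E]

lemma integrable_mul_norm_fderiv_truncatedBubble_sq (hf : AEStronglyMeasurable f)
    (hfM : ∀ x ∈ closedBall x₀ φ.rOut, |f x| ≤ M) {ε : ℝ} (hε : 0 < ε) :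
    Integrable (fun x ↦ f x * ‖fderiv ℝ (truncatedBubble φ ε) x‖ ^ 2) := by
  have hgrad := integrable_norm_fderiv_truncatedBubble_sq φ hε
  refine (hgrad.const_mul M).mono' (hf.mul hgrad.aestronglyMeasurable) (.of_forall fun x ↦ ?_)
  by_cases hx : x ∈ closedBall x₀ φ.rOut
  · rw [norm_mul, norm_of_nonneg (sq_nonneg ‖fderiv ℝ (truncatedBubble φ ε) x‖)]
    exact mul_le_mul_of_nonneg_right (hfM x hx) (sq_nonneg _)
  · simp [fderiv_truncatedBubble_of_notMem_closedBall φ hx]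

lemma exists_abs_integral_mul_norm_fderiv_truncatedBubble_sq_le
    (hfM : ∀ x ∈ closedBall x₀ φ.rOut, |f x| ≤ M) :
    ∃ C, ∀ κ ≥ 0, (∀ᶠ x in 𝓝 x₀, |f x| ≤ κ * ‖x - x₀‖ ^ 2) → ∃ K, ∀ ε > 0,
      |∫ x, f x * ‖fderiv ℝ (truncatedBubble φ ε) x‖ ^ 2|
        ≤ C * κ * (∫ x in closedBall x₀ φ.rOut, bubble x₀ ε x ^ 2) + K * ε ^ 2 := by
  obtain ⟨C, hC⟩ := exists_abs_mul_norm_fderiv_truncatedBubble_sq_le hfM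
  refine ⟨C, fun κ hκ hfκ ↦ ?_⟩
  obtain ⟨K, hK⟩ := hC κ hκ hfκ
  refine ⟨volume.real (closedBall x₀ φ.rOut) * K, fun ε hε ↦ ?_⟩
  have hcompact : IsCompact (closedBall x₀ φ.rOut) := isCompact_closedBall x₀ φ.rOut
  have hU : IntegrableOn (fun x ↦ C * κ * bubble x₀ ε x ^ 2) (closedBall x₀ φ.rOut) :=
    (((contDiff_bubble (n := 0) hε).continuous.pow 2).continuousOn.integrableOn_compact
      hcompact).const_mul _
  have hconst : IntegrableOn (fun _ ↦ K * ε ^ 2) (closedBall x₀ φ.rOut) :=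
    continuousOn_const.integrableOn_compact hcompact
  have hsupp (x : E) (hx : x ∉ closedBall x₀ φ.rOut) :
      f x * ‖fderiv ℝ (truncatedBubble φ ε) x‖ ^ 2 = 0 := by
    simp [fderiv_truncatedBubble_of_notMem_closedBall φ hx]
  rw [← setIntegral_eq_integral_of_forall_compl_eq_zero hsupp, ← norm_eq_abs]
  calc ‖∫ x in closedBall x₀ φ.rOut, f x * ‖fderiv ℝ (truncatedBubble φ ε) x‖ ^ 2‖
      ≤ ∫ x in closedBall x₀ φ.rOut, (C * κ * bubble x₀ ε x ^ 2 + K * ε ^ 2) := by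
        refine norm_integral_le_of_norm_le (hU.add hconst) ?_
        refine ae_restrict_of_forall_mem measurableSet_closedBall fun x hx ↦ ?_
        rw [norm_mul, norm_pow, norm_norm, norm_eq_abs]
        exact hK ε hε x hx
    _ = C * κ * (∫ x in closedBall x₀ φ.rOut, bubble x₀ ε x ^ 2)
          + volume.real (closedBall x₀ φ.rOut) * K * ε ^ 2 := by
        rw [integral_add hU hconst, integral_const_mul, setIntegral_const, smul_eq_mul, ← mul_assoc]

lemma isBigO_integral_mul_norm_fderiv_truncatedBubble_sq (hE : finrank ℝ E = 4)
    (hfM : ∀ x ∈ closedBall x₀ φ.rOut, |f x| ≤ M) (hf : f =O[𝓝 x₀] fun x ↦ ‖x - x₀‖ ^ 2) :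
    (fun ε ↦ ∫ x, f x * ‖fderiv ℝ (truncatedBubble φ ε) x‖ ^ 2)
      =O[𝓝[>] 0] fun ε ↦ ε ^ 2 * log ε⁻¹ := by
  obtain ⟨C, hC⟩ := exists_abs_integral_mul_norm_fderiv_truncatedBubble_sq_le hfM
  obtain ⟨κ, hκ, hfκ⟩ := hf.exists_nonneg
  obtain ⟨K, hK⟩ := hC κ hκ (by simpa using hfκ.bound)
  have hU := (isTheta_setIntegral_bubble_sq (x₀ := x₀) hE φ.rOut_pos).isBigO
  refine IsBigO.trans (.of_bound' ?_)
    ((hU.const_mul_left (C * κ)).add (isLittleO_sq_sq_mul_log_inv.isBigO.const_mul_left K))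
  filter_upwards [self_mem_nhdsWithin] with ε hε
  exact (hK ε hε).trans (le_abs_self _)

lemma isLittleO_integral_mul_norm_fderiv_truncatedBubble_sq (hE : finrank ℝ E = 4)
    (hfM : ∀ x ∈ closedBall x₀ φ.rOut, |f x| ≤ M) (hf : f =o[𝓝 x₀] fun x ↦ ‖x - x₀‖ ^ 2) :
    (fun ε ↦ ∫ x, f x * ‖fderiv ℝ (truncatedBubble φ ε) x‖ ^ 2)
      =o[𝓝[>] 0] fun ε ↦ ε ^ 2 * log ε⁻¹ := by
  obtain ⟨C, hC⟩ := exists_abs_integral_mul_norm_fderiv_truncatedBubble_sq_le hfM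
  have hU := (isTheta_setIntegral_bubble_sq (x₀ := x₀) hE φ.rOut_pos).isBigO
  obtain ⟨L, hL, hCU⟩ := (hU.const_mul_left C).exists_pos
  refine isLittleO_iff.2 fun c hc ↦ ?_
  have hκ : 0 < c / (2 * L) := by positivity
  obtain ⟨K, hK⟩ := hC (c / (2 * L)) hκ.le (by simpa using isLittleO_iff.1 hf hκ)
  have hKsq := (isLittleO_sq_sq_mul_log_inv.const_mul_left K).def (half_pos hc)
  filter_upwards [hCU.bound, hKsq, self_mem_nhdsWithin] with ε hCU hKsq hε
  rw [norm_eq_abs] at hCU hKsq ⊢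
  set Q : ℝ := ∫ x in closedBall x₀ φ.rOut, bubble x₀ ε x ^ 2
  calc |∫ x, f x * ‖fderiv ℝ (truncatedBubble φ ε) x‖ ^ 2|
      ≤ C * (c / (2 * L)) * Q + K * ε ^ 2 := hK ε hε
    _ = c / (2 * L) * (C * Q) + K * ε ^ 2 := by ring
    _ ≤ c / (2 * L) * (L * ‖ε ^ 2 * log ε⁻¹‖) + c / 2 * ‖ε ^ 2 * log ε⁻¹‖ := by
        exact add_le_add (mul_le_mul_of_nonneg_left ((le_abs_self _).trans hCU) hκ.le)
          ((le_abs_self _).trans hKsq)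
    _ = c * ‖ε ^ 2 * log ε⁻¹‖ := by field_simp; ring

end WeightedDirichletIntegral

section NormalizedBubble

variable {E : Type*} [NormedAddCommGroup E] [InnerProductSpace ℝ E] [FiniteDimensional ℝ E]
  [MeasurableSpace E] [BorelSpace E] {x₀ x : E} (φ : ContDiffBump x₀) {ε : ℝ}

/-- The Sobolev quotient `‖∇U‖₂² / ‖U‖₄²` of the standard bubble `U = bubble 0 1`; for
four-dimensional `E` it is the Sobolev constant `S`. -/
def bubbleQuotient (E : Type*) [NormedAddCommGroup E] [InnerProductSpace ℝ E]
    [FiniteDimensional ℝ E] [MeasurableSpace E] [BorelSpace E] : ℝ :=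
  (∫ y, ‖fderiv ℝ (bubble (0 : E) 1) y‖ ^ 2) / √(∫ y : E, bubble 0 1 y ^ 4)

/-- The truncated bubble divided by its `L⁴` norm. -/
def normalizedBubble (ε : ℝ) (x : E) : ℝ :=
  (√√(∫ y, truncatedBubble φ ε y ^ 4))⁻¹ * truncatedBubble φ ε x

lemma contDiff_normalizedBubble {n : ℕ∞} (hε : 0 < ε) : ContDiff ℝ n (normalizedBubble φ ε) :=
  contDiff_const.mul (contDiff_truncatedBubble φ hε)

lemma tsupport_normalizedBubble_subset :
    tsupport (normalizedBubble φ ε) ⊆ closedBall x₀ φ.rOut :=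
  (tsupport_mul_subset_right (g := truncatedBubble φ ε)).trans (tsupport_truncatedBubble_subset φ)

lemma hasCompactSupport_normalizedBubble : HasCompactSupport (normalizedBubble φ ε) :=
  (hasCompactSupport_truncatedBubble φ).mul_left

lemma normalizedBubble_nonneg (hε : 0 < ε) : 0 ≤ normalizedBubble φ ε x :=
  mul_nonneg (by positivity) (truncatedBubble_nonneg φ hε)

lemma integral_normalizedBubble_pow_four (hε : 0 < ε) :
    ∫ x, normalizedBubble φ ε x ^ 4 = 1 := by
  have hI := integral_truncatedBubble_pow_four_pos φ hε
  simp only [normalizedBubble, mul_pow, integral_const_mul]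
  rw [inv_pow, show √√(∫ y, truncatedBubble φ ε y ^ 4) ^ 4
      = (√√(∫ y, truncatedBubble φ ε y ^ 4) ^ 2) ^ 2 by ring, sq_sqrt (sqrt_nonneg _),
    sq_sqrt hI.le, inv_mul_cancel₀ hI.ne']

lemma norm_fderiv_normalizedBubble_sq (hε : 0 < ε) :
    ‖fderiv ℝ (normalizedBubble φ ε) x‖ ^ 2
      = (√(∫ y, truncatedBubble φ ε y ^ 4))⁻¹ * ‖fderiv ℝ (truncatedBubble φ ε) x‖ ^ 2 := by
  have hdiff : DifferentiableAt ℝ (truncatedBubble φ ε) x :=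
    (contDiff_truncatedBubble φ (n := 1) hε).differentiable one_ne_zero x
  have hsmul : fderiv ℝ (normalizedBubble φ ε) x
      = (√√(∫ y, truncatedBubble φ ε y ^ 4))⁻¹ • fderiv ℝ (truncatedBubble φ ε) x :=
    fderiv_const_mul hdiff _
  rw [hsmul, norm_smul, mul_pow, norm_inv, norm_of_nonneg (sqrt_nonneg _), inv_pow,
    sq_sqrt (sqrt_nonneg _)]

lemma integral_truncatedBubble_pow_four_le (hE : finrank ℝ E = 4) (hε : 0 < ε) :
    ∫ x, truncatedBubble φ ε x ^ 4 ≤ ∫ y : E, bubble 0 1 y ^ 4 := by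
  rw [← integral_bubble_pow_four (x₀ := x₀) hE hε]
  exact integral_mono (integrable_truncatedBubble_pow_four φ hε)
    (integrable_bubble_pow_four hE hε)
    fun x ↦ pow_le_pow_left₀ (truncatedBubble_nonneg φ hε) (truncatedBubble_le_bubble φ hε) 4

lemma isBigO_inv_sqrt_integral_truncatedBubble_pow_four_sub (hE : finrank ℝ E = 4) :
    (fun ε ↦ (√(∫ x, truncatedBubble φ ε x ^ 4))⁻¹ - (√(∫ y : E, bubble 0 1 y ^ 4))⁻¹)
      =O[𝓝[>] 0] fun ε ↦ ε ^ 4 := by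
  have hD := integral_bubble_pow_four_pos hE
  have hI := isBigO_integral_truncatedBubble_pow_four_sub φ hE
  have hlim : Tendsto (fun ε : ℝ ↦ ε ^ 4) (𝓝[>] 0) (𝓝 0) :=
    ((continuous_pow 4).tendsto' 0 0 (by norm_num)).mono_left nhdsWithin_le_nhds
  have htendsto : Tendsto (fun ε ↦ ∫ x, truncatedBubble φ ε x ^ 4) (𝓝[>] 0)
      (𝓝 (∫ y : E, bubble 0 1 y ^ 4)) :=
    tendsto_sub_nhds_zero_iff.1 (hI.trans_tendsto hlim)
  exact (((hasDerivAt_sqrt hD.ne').fun_inv (sqrt_pos.2 hD).ne').isBigO_sub.comp_tendsto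
    htendsto).trans hI

lemma isBigO_inv_sqrt_integral_truncatedBubble_pow_four_one (hE : finrank ℝ E = 4) :
    (fun ε ↦ (√(∫ x, truncatedBubble φ ε x ^ 4))⁻¹) =O[𝓝[>] 0] fun _ ↦ (1 : ℝ) := by
  have hlim : Tendsto (fun ε : ℝ ↦ ε ^ 4) (𝓝[>] 0) (𝓝 0) :=
    ((continuous_pow 4).tendsto' 0 0 (by norm_num)).mono_left nhdsWithin_le_nhds
  exact (tendsto_sub_nhds_zero_iff.1
    ((isBigO_inv_sqrt_integral_truncatedBubble_pow_four_sub φ hE).trans_tendsto hlim)).isBigO_one ℝ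

lemma isBigO_dirichlet_normalizedBubble_sub (hE : finrank ℝ E = 4) :
    (fun ε ↦ (∫ x, ‖fderiv ℝ (normalizedBubble φ ε) x‖ ^ 2) - bubbleQuotient E)
      =O[𝓝[>] 0] fun ε ↦ ε ^ 2 := by
  set G₀ : ℝ := ∫ y, ‖fderiv ℝ (bubble (0 : E) 1) y‖ ^ 2
  have hdirichlet : (fun ε ↦ (√(∫ x, truncatedBubble φ ε x ^ 4))⁻¹ *
      ((∫ x, ‖fderiv ℝ (truncatedBubble φ ε) x‖ ^ 2) - G₀)) =O[𝓝[>] 0] fun ε ↦ ε ^ 2 := by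
    simpa using (isBigO_inv_sqrt_integral_truncatedBubble_pow_four_one φ hE).mul
      (isBigO_integral_norm_fderiv_truncatedBubble_sq_sub φ hE)
  have hpow : (fun ε : ℝ ↦ ε ^ 4) =O[𝓝[>] 0] fun ε ↦ ε ^ 2 :=
    (isLittleO_pow_pow (by norm_num)).isBigO.mono nhdsWithin_le_nhds
  have hnorm := ((isBigO_inv_sqrt_integral_truncatedBubble_pow_four_sub φ hE).trans
    hpow).const_mul_left G₀
  refine (hdirichlet.add hnorm).congr' ?_ .rfl
  filter_upwards [self_mem_nhdsWithin] with ε hε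
  simp_rw [norm_fderiv_normalizedBubble_sq φ hε]
  rw [integral_const_mul, bubbleQuotient]
  ring

variable {a : E → ℝ} {γ M : ℝ}

lemma integral_mul_norm_fderiv_normalizedBubble_sq_eq (ha : AEStronglyMeasurable a)
    (haM : ∀ x ∈ closedBall x₀ φ.rOut, |a x - γ| ≤ M) (hε : 0 < ε) :
    ∫ x, a x * ‖fderiv ℝ (normalizedBubble φ ε) x‖ ^ 2
      = γ * (∫ x, ‖fderiv ℝ (normalizedBubble φ ε) x‖ ^ 2)
        + (√(∫ x, truncatedBubble φ ε x ^ 4))⁻¹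
          * ∫ x, (a x - γ) * ‖fderiv ℝ (truncatedBubble φ ε) x‖ ^ 2 := by
  have hdecomp (x : E) : a x * ‖fderiv ℝ (normalizedBubble φ ε) x‖ ^ 2
      = (√(∫ x, truncatedBubble φ ε x ^ 4))⁻¹ * (γ * ‖fderiv ℝ (truncatedBubble φ ε) x‖ ^ 2
        + (a x - γ) * ‖fderiv ℝ (truncatedBubble φ ε) x‖ ^ 2) := by
    rw [norm_fderiv_normalizedBubble_sq φ hε]
    ring
  simp_rw [hdecomp, norm_fderiv_normalizedBubble_sq φ hε]
  have hcorrection : Integrable fun x ↦ (a x - γ) * ‖fderiv ℝ (truncatedBubble φ ε) x‖ ^ 2 :=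
    integrable_mul_norm_fderiv_truncatedBubble_sq (ha.sub aestronglyMeasurable_const) haM hε
  rw [integral_const_mul, integral_add
    ((integrable_norm_fderiv_truncatedBubble_sq φ hε).const_mul γ) hcorrection,
    integral_const_mul, integral_const_mul]
  ring

lemma isBigO_energy_normalizedBubble_sub (hE : finrank ℝ E = 4) (ha : AEStronglyMeasurable a)
    (haM : ∀ x ∈ closedBall x₀ φ.rOut, |a x - γ| ≤ M)
    (haγ : (fun x ↦ a x - γ) =O[𝓝 x₀] fun x ↦ ‖x - x₀‖ ^ 2) :
    (fun ε ↦ (∫ x, a x * ‖fderiv ℝ (normalizedBubble φ ε) x‖ ^ 2) - γ * bubbleQuotient E)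
      =O[𝓝[>] 0] fun ε ↦ ε ^ 2 * log ε⁻¹ := by
  have hleading := (isBigO_dirichlet_normalizedBubble_sub φ hE).const_mul_left γ
  have hcorrection := (isBigO_inv_sqrt_integral_truncatedBubble_pow_four_one φ hE).mul
    (isBigO_integral_mul_norm_fderiv_truncatedBubble_sq hE haM haγ)
  simp only [one_mul] at hcorrection
  refine ((hleading.trans isLittleO_sq_sq_mul_log_inv.isBigO).add hcorrection).congr' ?_ .rfl
  filter_upwards [self_mem_nhdsWithin] with ε hε
  rw [integral_mul_norm_fderiv_normalizedBubble_sq_eq φ ha haM hε]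
  ring

lemma isLittleO_energy_normalizedBubble_sub (hE : finrank ℝ E = 4) (ha : AEStronglyMeasurable a)
    (haM : ∀ x ∈ closedBall x₀ φ.rOut, |a x - γ| ≤ M)
    (haγ : (fun x ↦ a x - γ) =o[𝓝 x₀] fun x ↦ ‖x - x₀‖ ^ 2) :
    (fun ε ↦ (∫ x, a x * ‖fderiv ℝ (normalizedBubble φ ε) x‖ ^ 2) - γ * bubbleQuotient E)
      =o[𝓝[>] 0] fun ε ↦ ε ^ 2 * log ε⁻¹ := by
  have hleading := (isBigO_dirichlet_normalizedBubble_sub φ hE).const_mul_left γ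
  have hcorrection := (isBigO_inv_sqrt_integral_truncatedBubble_pow_four_one φ hE).mul_isLittleO
    (isLittleO_integral_mul_norm_fderiv_truncatedBubble_sq hE haM haγ)
  simp only [one_mul] at hcorrection
  refine ((hleading.trans_isLittleO isLittleO_sq_sq_mul_log_inv).add hcorrection).congr' ?_ .rfl
  filter_upwards [self_mem_nhdsWithin] with ε hε
  rw [integral_mul_norm_fderiv_normalizedBubble_sq_eq φ ha haM hε]
  ring

lemma mul_setIntegral_bubble_sq_le_integral_truncatedBubble_mul {δ : ℝ} (hε : 0 < ε)
    (hεδ : ε ≤ δ) :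
    ε / δ * ∫ x in closedBall x₀ φ.rIn, bubble x₀ δ x ^ 2
      ≤ ∫ x, truncatedBubble φ ε x * truncatedBubble φ δ x := by
  have hδ : 0 < δ := hε.trans_le hεδ
  have hUsq : IntegrableOn (fun x ↦ bubble x₀ δ x ^ 2) (closedBall x₀ φ.rIn) :=
    ((contDiff_bubble (n := 0) hδ).continuous.pow 2).continuousOn.integrableOn_compact
      (isCompact_closedBall x₀ φ.rIn)
  have hww : Integrable (fun x ↦ truncatedBubble φ ε x * truncatedBubble φ δ x) :=
    ((continuous_truncatedBubble φ hε).mul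
      (continuous_truncatedBubble φ hδ)).integrable_of_hasCompactSupport
      (hasCompactSupport_truncatedBubble φ).mul_right
  calc ε / δ * ∫ x in closedBall x₀ φ.rIn, bubble x₀ δ x ^ 2
      = ∫ x in closedBall x₀ φ.rIn, ε / δ * bubble x₀ δ x ^ 2 := (integral_const_mul _ _).symm
    _ ≤ ∫ x in closedBall x₀ φ.rIn, truncatedBubble φ ε x * truncatedBubble φ δ x := by
        refine setIntegral_mono_on (hUsq.const_mul _) hww.integrableOn measurableSet_closedBall
          fun x hx ↦ ?_
        rw [truncatedBubble_eq_bubble φ hx, truncatedBubble_eq_bubble φ hx]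
        exact div_mul_bubble_sq_le_bubble_mul_bubble hε hεδ
    _ ≤ ∫ x, truncatedBubble φ ε x * truncatedBubble φ δ x :=
        setIntegral_le_integral hww (.of_forall fun x ↦
          mul_nonneg (truncatedBubble_nonneg φ hε) (truncatedBubble_nonneg φ hδ))

lemma inv_sqrt_mul_integral_truncatedBubble_mul_le_integral_normalizedBubble_mul {δ : ℝ}
    (hE : finrank ℝ E = 4) (hε : 0 < ε) (hδ : 0 < δ) :
    (√(∫ y : E, bubble 0 1 y ^ 4))⁻¹ * ∫ x, truncatedBubble φ ε x * truncatedBubble φ δ x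
      ≤ ∫ x, normalizedBubble φ ε x * normalizedBubble φ δ x := by
  have hscale {η : ℝ} (hη : 0 < η) : (√√(∫ y : E, bubble 0 1 y ^ 4))⁻¹
      ≤ (√√(∫ y, truncatedBubble φ η y ^ 4))⁻¹ :=
    inv_anti₀ (sqrt_pos.2 (sqrt_pos.2 (integral_truncatedBubble_pow_four_pos φ hη)))
      (sqrt_le_sqrt (sqrt_le_sqrt (integral_truncatedBubble_pow_four_le φ hE hη)))
  have hnonneg : 0 ≤ ∫ x, truncatedBubble φ ε x * truncatedBubble φ δ x :=
    integral_nonneg fun x ↦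
      mul_nonneg (truncatedBubble_nonneg φ hε) (truncatedBubble_nonneg φ hδ)
  simp_rw [normalizedBubble, mul_mul_mul_comm _ (truncatedBubble φ ε _)]
  rw [integral_const_mul]
  refine mul_le_mul_of_nonneg_right ?_ hnonneg
  rw [← mul_self_sqrt (sqrt_nonneg (∫ y : E, bubble 0 1 y ^ 4)), mul_inv]
  exact mul_le_mul (hscale hε) (hscale hδ) (by positivity) (by positivity)

lemma exists_eventually_le_integral_normalizedBubble_mul (hE : finrank ℝ E = 4) :
    ∃ c > 0, ∀ᶠ δ in 𝓝[>] 0, ∀ ε ∈ Set.Ioc 0 δ,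
      c * (ε * δ * log δ⁻¹) ≤ ∫ x, normalizedBubble φ ε x * normalizedBubble φ δ x := by
  obtain ⟨k, hk, hbound⟩ :=
    (isTheta_setIntegral_bubble_sq (x₀ := x₀) hE φ.rIn_pos).isBigO_symm.exists_pos
  have hD := integral_bubble_pow_four_pos hE
  refine ⟨(√(∫ y : E, bubble 0 1 y ^ 4))⁻¹ * k⁻¹, by positivity, ?_⟩
  filter_upwards [hbound.bound, self_mem_nhdsWithin] with δ hbound (hδ : 0 < δ) ε ⟨hε, hεδ⟩
  have hQ : k⁻¹ * (δ ^ 2 * log δ⁻¹) ≤ ∫ x in closedBall x₀ φ.rIn, bubble x₀ δ x ^ 2 := by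
    rw [norm_of_nonneg (integral_nonneg fun x ↦ sq_nonneg _)] at hbound
    exact (inv_mul_le_iff₀ hk).2 ((le_abs_self _).trans hbound)
  calc (√(∫ y : E, bubble 0 1 y ^ 4))⁻¹ * k⁻¹ * (ε * δ * log δ⁻¹)
      = (√(∫ y : E, bubble 0 1 y ^ 4))⁻¹ * (ε / δ * (k⁻¹ * (δ ^ 2 * log δ⁻¹))) := by field_simp
    _ ≤ (√(∫ y : E, bubble 0 1 y ^ 4))⁻¹
          * (ε / δ * ∫ x in closedBall x₀ φ.rIn, bubble x₀ δ x ^ 2) := by gcongr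
    _ ≤ (√(∫ y : E, bubble 0 1 y ^ 4))⁻¹
          * ∫ x, truncatedBubble φ ε x * truncatedBubble φ δ x := by
        gcongr
        exact mul_setIntegral_bubble_sq_le_integral_truncatedBubble_mul φ hε hεδ
    _ ≤ ∫ x, normalizedBubble φ ε x * normalizedBubble φ δ x :=
        inv_sqrt_mul_integral_truncatedBubble_mul_le_integral_normalizedBubble_mul φ hE hε hδ

end NormalizedBubble
section Expansion

variable {E : Type*} [NormedAddCommGroup E] {f : E → ℝ} {x₀ : E} {A k l : ℝ}

lemma isBigO_sub_of_tendsto_expansion (hk : k ≠ 0)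
    (h : Tendsto (fun x ↦ (f x - f x₀ - A * ‖x - x₀‖ ^ k) / ‖x - x₀‖ ^ k) (𝓝[≠] x₀) (𝓝 0)) :
    (fun x ↦ f x - f x₀) =O[𝓝 x₀] fun x ↦ ‖x - x₀‖ ^ k := by
  have hpunctured :
      (fun x ↦ f x - f x₀ - A * ‖x - x₀‖ ^ k) =o[𝓝[≠] x₀] fun x ↦ ‖x - x₀‖ ^ k := by
    refine (isLittleO_iff_tendsto' ?_).2 h
    filter_upwards [self_mem_nhdsWithin] with x hx hzero
    exact absurd hzero (rpow_pos_of_pos (norm_sub_pos_iff.2 hx) k).ne'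
  have hremainder : (fun x ↦ f x - f x₀ - A * ‖x - x₀‖ ^ k) =o[𝓝 x₀] fun x ↦ ‖x - x₀‖ ^ k := by
    rw [← nhdsWithin_univ, ← Set.union_compl_self {x₀}, Set.singleton_union, isLittleO_insert]
    · exact hpunctured
    · simp [zero_rpow hk]
  simpa using hremainder.isBigO.add ((isBigO_refl (fun x ↦ ‖x - x₀‖ ^ k) (𝓝 x₀)).const_mul_left A)

lemma exists_eventually_abs_le_of_isBigO_norm_sub_sq
    (hf : f =O[𝓝 x₀] fun x ↦ ‖x - x₀‖ ^ 2) : ∃ M, ∀ᶠ x in 𝓝 x₀, |f x| ≤ M := by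
  have hcont : Continuous fun x : E ↦ ‖x - x₀‖ ^ 2 := by fun_prop
  exact (hf.trans ((hcont.tendsto x₀).isBigO_one ℝ)).isBoundedUnder_le

lemma isLittleO_norm_sub_rpow_norm_sub_rpow (hk : 0 ≤ k) (hkl : k < l) :
    (fun x : E ↦ ‖x - x₀‖ ^ l) =o[𝓝 x₀] fun x ↦ ‖x - x₀‖ ^ k := by
  have hlim : Tendsto (fun x : E ↦ ‖x - x₀‖ ^ (l - k)) (𝓝 x₀) (𝓝 0) := by
    have hcont : Continuous fun x : E ↦ ‖x - x₀‖ ^ (l - k) :=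
      (continuous_id.sub continuous_const).norm.rpow_const fun _ ↦ .inr (sub_pos.2 hkl).le
    exact hcont.tendsto' x₀ 0 (by simp [zero_rpow (sub_pos.2 hkl).ne'])
  refine (((isLittleO_one_iff ℝ).2 hlim).mul_isBigO
    (isBigO_refl (fun x ↦ ‖x - x₀‖ ^ k) (𝓝 x₀))).congr (fun x ↦ ?_) fun x ↦ one_mul _
  rw [← rpow_add_of_nonneg (norm_nonneg _) (sub_pos.2 hkl).le hk, sub_add_cancel]

end Expansion

section ScaleSeparation

lemma exists_eventually_abs_comp_mul_le {f : ℝ → ℝ}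
    (hf : f =O[𝓝[>] 0] fun ε ↦ ε ^ 2 * log ε⁻¹) :
    ∃ M > 0, ∀ s ∈ Set.Ioc 0 1, ∀ᶠ δ in 𝓝[>] 0,
      |f (s * δ)| ≤ M * s ^ 2 * (δ ^ 2 * log δ⁻¹) := by
  obtain ⟨M, hM, hfM⟩ := hf.exists_pos
  refine ⟨2 * M, by positivity, fun s ⟨hs, hs1⟩ ↦ ?_⟩
  have hscale : Tendsto (fun δ ↦ s * δ) (𝓝[>] 0) (𝓝[>] 0) :=
    tendsto_nhdsWithin_iff.2
      ⟨((continuous_const_mul s).tendsto' 0 0 (mul_zero s)).mono_left nhdsWithin_le_nhds,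
        by filter_upwards [self_mem_nhdsWithin] with δ (hδ : 0 < δ) using mul_pos hs hδ⟩
  have hs_log : 0 ≤ log s⁻¹ := log_nonneg ((one_le_inv₀ hs).2 hs1)
  filter_upwards [hscale.eventually hfM.bound, self_mem_nhdsWithin,
    tendsto_log_inv_nhdsGT_zero.eventually_ge_atTop (log s⁻¹)] with δ hbound (hδ : 0 < δ) hδ_log
  have hlog : log (s * δ)⁻¹ = log s⁻¹ + log δ⁻¹ := by
    rw [mul_inv, log_mul (inv_ne_zero hs.ne') (inv_ne_zero hδ.ne')]
  have hnonneg : 0 ≤ (s * δ) ^ 2 * log (s * δ)⁻¹ :=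
    mul_nonneg (sq_nonneg _) (hlog ▸ add_nonneg hs_log (hs_log.trans hδ_log))
  calc |f (s * δ)| ≤ M * ((s * δ) ^ 2 * log (s * δ)⁻¹) := by
        simpa only [norm_eq_abs, abs_of_nonneg hnonneg] using hbound
    _ ≤ M * ((s * δ) ^ 2 * (2 * log δ⁻¹)) := by
        gcongr
        linarith
    _ = 2 * M * s ^ 2 * (δ ^ 2 * log δ⁻¹) := by ring

lemma exists_coupled_energy_lt {P Q : ℝ → ℝ} {X : ℝ → ℝ → ℝ} {T c lam : ℝ}
    (hP : (fun ε ↦ P ε - T) =O[𝓝[>] 0] fun ε ↦ ε ^ 2 * log ε⁻¹)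
    (hQ : (fun δ ↦ Q δ - T) =o[𝓝[>] 0] fun δ ↦ δ ^ 2 * log δ⁻¹) (hc : 0 < c)
    (hX : ∀ᶠ δ in 𝓝[>] 0, ∀ ε ∈ Set.Ioc 0 δ, c * (ε * δ * log δ⁻¹) ≤ X ε δ) (hlam : 0 < lam) :
    ∃ ε > 0, ∃ δ > 0, 1 / 2 * P ε + 1 / 2 * Q δ - lam * X ε δ < T := by
  obtain ⟨M, hM, hPM⟩ := exists_eventually_abs_comp_mul_le hP
  obtain ⟨s, hs, hs1, hsM⟩ : ∃ s > 0, s ≤ 1 ∧ M * s ≤ lam * c :=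
    ⟨min 1 (lam * c / M), by positivity, min_le_left _ _,
      (le_div_iff₀' hM).1 (min_le_right _ _)⟩
  obtain ⟨δ, hPδ, hQδ, hXδ, hlogpos, hδ : 0 < δ⟩ :=
    ((hPM s ⟨hs, hs1⟩).and <| (hQ.def (show 0 < lam * c * s / 2 by positivity)).and <|
      hX.and <| (tendsto_log_inv_nhdsGT_zero.eventually_gt_atTop 0).and self_mem_nhdsWithin).exists
  set ℓ : ℝ := δ ^ 2 * log δ⁻¹
  have hℓ : 0 < ℓ := by positivity
  have hPle : P (s * δ) - T ≤ lam * c * s * ℓ := calc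
    P (s * δ) - T ≤ M * s ^ 2 * ℓ := (le_abs_self _).trans hPδ
    _ = M * s * (s * ℓ) := by ring
    _ ≤ lam * c * (s * ℓ) := by gcongr
    _ = lam * c * s * ℓ := by ring
  have hQle : Q δ - T ≤ lam * c * s / 2 * ℓ := by
    simpa only [norm_of_nonneg hℓ.le] using (le_abs_self _).trans hQδ
  have hXle : lam * c * s * ℓ ≤ lam * X (s * δ) δ := calc
    lam * c * s * ℓ = lam * (c * (s * δ * δ * log δ⁻¹)) := by ring
    _ ≤ lam * X (s * δ) δ := by
      gcongr
      exact hXδ _ ⟨by positivity, mul_le_of_le_one_left hδ.le hs1⟩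
  have hgain : 0 < lam * c * s * ℓ := by positivity
  exact ⟨s * δ, by positivity, δ, hδ, by linarith⟩

end ScaleSeparation

section CoupledEnergy

variable {E : Type*} [NormedAddCommGroup E] [InnerProductSpace ℝ E] [FiniteDimensional ℝ E]
  [MeasurableSpace E] [BorelSpace E]

lemma mul_integral_div_integral_rpow_eq_bubbleQuotient :
    ((4 : ℕ) - 2 : ℝ) ^ 2 * (∫ y : E, ‖y‖ ^ 2 * (1 + ‖y‖ ^ 2) ^ (-((4 : ℕ) : ℝ)))
      / (∫ y : E, (1 + ‖y‖ ^ 2) ^ (-((4 : ℕ) : ℝ))) ^ ((((4 : ℕ) : ℝ) - 2) / (4 : ℕ))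
      = bubbleQuotient E := by
  have hpow (y : E) : (1 + ‖y‖ ^ 2) ^ (-((4 : ℕ) : ℝ)) = ((1 + ‖y‖ ^ 2) ^ 4)⁻¹ := by
    rw [rpow_neg (by positivity), rpow_natCast]
  have hbubble (y : E) : bubble 0 1 y ^ 4 = ((1 + ‖y‖ ^ 2) ^ 4)⁻¹ := by
    simp [bubble]
  have hgrad (y : E) :
      ‖fderiv ℝ (bubble (0 : E) 1) y‖ ^ 2 = 4 * (‖y‖ ^ 2 * ((1 + ‖y‖ ^ 2) ^ 4)⁻¹) := by
    rw [norm_fderiv_bubble one_pos, sub_zero]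
    field_simp
    ring
  simp_rw [bubbleQuotient, hgrad, hbubble, hpow, integral_const_mul, sqrt_eq_rpow]
  norm_num

variable {Ω : Set E} {x₀ : E} {φ : ContDiffBump x₀} {a b : E → ℝ} {γ₀ lam ε : ℝ}

lemma rpow_setIntegral_abs_normalizedBubble_rpow (hΩ : closedBall x₀ φ.rOut ⊆ Ω) (hε : 0 < ε) :
    (∫ x in Ω, |normalizedBubble φ ε x| ^ (4 : ℝ)) ^ (1 / 4 : ℝ) = 1 := by
  have hpow (x : E) : |normalizedBubble φ ε x| ^ (4 : ℝ) = normalizedBubble φ ε x ^ 4 := by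
    rw [abs_of_nonneg (normalizedBubble_nonneg φ hε)]
    exact_mod_cast rpow_natCast _ 4
  simp_rw [hpow]
  rw [setIntegral_eq_integral_of_forall_compl_eq_zero fun x hx ↦ ?_,
    integral_normalizedBubble_pow_four φ hε, one_rpow]
  rw [image_eq_zero_of_notMem_tsupport fun h ↦ hx (hΩ (tsupport_normalizedBubble_subset φ h)),
    zero_pow four_ne_zero]

theorem stmt_6_general (hE : finrank ℝ E = 4) (hΩ : Ω ∈ 𝓝 x₀) (ha : AEStronglyMeasurable a)
    (hb : AEStronglyMeasurable b) (haγ : (fun x ↦ a x - γ₀) =O[𝓝 x₀] fun x ↦ ‖x - x₀‖ ^ 2)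
    (hbγ : (fun x ↦ b x - γ₀) =o[𝓝 x₀] fun x ↦ ‖x - x₀‖ ^ 2) (hlam : 0 < lam) :
    ∃ u v : E → ℝ,
      ContDiff ℝ (⊤ : ℕ∞) u ∧ HasCompactSupport u ∧ tsupport u ⊆ Ω ∧
      ContDiff ℝ (⊤ : ℕ∞) v ∧ HasCompactSupport v ∧ tsupport v ⊆ Ω ∧
      (∫ x in Ω, |u x| ^ (4 : ℝ)) ^ (1 / 4 : ℝ) = 1 ∧
      (∫ x in Ω, |v x| ^ (4 : ℝ)) ^ (1 / 4 : ℝ) = 1 ∧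
      (1 / 2) * (∫ x in Ω, a x * ‖fderiv ℝ u x‖ ^ 2)
        + (1 / 2) * (∫ x in Ω, b x * ‖fderiv ℝ v x‖ ^ 2)
        - lam * ∫ x in Ω, u x * v x
      < γ₀ * bubbleQuotient E := by
  obtain ⟨Ma, haM⟩ := exists_eventually_abs_le_of_isBigO_norm_sub_sq haγ
  obtain ⟨Mb, hbM⟩ := exists_eventually_abs_le_of_isBigO_norm_sub_sq hbγ.isBigO
  obtain ⟨φ, hφ⟩ := exists_contDiffBump_closedBall_subset (inter_mem hΩ (haM.and hbM))
  obtain ⟨c, hc, hcross⟩ := exists_eventually_le_integral_normalizedBubble_mul φ hE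
  obtain ⟨ε, hε, δ, hδ, hlt⟩ := exists_coupled_energy_lt
    (isBigO_energy_normalizedBubble_sub φ hE ha (fun x hx ↦ (hφ hx).2.1) haγ)
    (isLittleO_energy_normalizedBubble_sub φ hE hb (fun x hx ↦ (hφ hx).2.2) hbγ) hc hcross hlam
  have hφΩ : closedBall x₀ φ.rOut ⊆ Ω := fun x hx ↦ (hφ hx).1
  have hsupp (η : ℝ) : tsupport (normalizedBubble φ η) ⊆ Ω :=
    (tsupport_normalizedBubble_subset φ).trans hφΩ
  refine ⟨normalizedBubble φ ε, normalizedBubble φ δ, contDiff_normalizedBubble φ hε,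
    hasCompactSupport_normalizedBubble φ, hsupp ε, contDiff_normalizedBubble φ hδ,
    hasCompactSupport_normalizedBubble φ, hsupp δ,
    rpow_setIntegral_abs_normalizedBubble_rpow hφΩ hε,
    rpow_setIntegral_abs_normalizedBubble_rpow hφΩ hδ, ?_⟩
  rwa [setIntegral_eq_integral_of_forall_compl_eq_zero fun x hx ↦ ?_,
    setIntegral_eq_integral_of_forall_compl_eq_zero fun x hx ↦ ?_,
    setIntegral_eq_integral_of_forall_compl_eq_zero fun x hx ↦ ?_]
  · rw [image_eq_zero_of_notMem_tsupport fun h ↦ hx (hsupp ε h), zero_mul]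
  · simp [fderiv_of_notMem_tsupport (𝕜 := ℝ) fun h ↦ hx (hsupp δ h)]
  · simp [fderiv_of_notMem_tsupport (𝕜 := ℝ) fun h ↦ hx (hsupp ε h)]

end CoupledEnergy

theorem stmt_6
    (N : ℕ) (hN : N = 4)
    (Ω : Set (EuclideanSpace ℝ (Fin N)))
    (hΩo : IsOpen Ω) (hΩb : Bornology.IsBounded Ω) (hΩne : Ω.Nonempty)
    (x₀ : EuclideanSpace ℝ (Fin N)) (hx₀ : x₀ ∈ Ω)
    (a b : EuclideanSpace ℝ (Fin N) → ℝ)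
    (ha : Continuous a) (hb : Continuous b)
    (hapos : ∀ x ∈ closure Ω, 0 < a x) (hbpos : ∀ x ∈ closure Ω, 0 < b x)
    (γ₀ : ℝ) (haγ : a x₀ = γ₀) (hbγ : b x₀ = γ₀)
    (hamin : ∀ x ∈ closure Ω, γ₀ ≤ a x) (hbmin : ∀ x ∈ closure Ω, γ₀ ≤ b x)
    (k l A B : ℝ) (hA : 0 < A) (hB : 0 < B)
    (hk : k = 2) (hl : 2 < l)
    (hexpa : Tendsto (fun x => (a x - a x₀ - A * ‖x - x₀‖ ^ k) / ‖x - x₀‖ ^ k)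
      (𝓝[≠] x₀) (𝓝 0))
    (hexpb : Tendsto (fun x => (b x - b x₀ - B * ‖x - x₀‖ ^ l) / ‖x - x₀‖ ^ l)
      (𝓝[≠] x₀) (𝓝 0))
    (q : ℝ) (hq : q = 2 * (N : ℝ) / ((N : ℝ) - 2))
    (K₁ K₂ S : ℝ)
    (hK₁ : K₁ = ((N : ℝ) - 2) ^ 2 *
      ∫ y : EuclideanSpace ℝ (Fin N), ‖y‖ ^ 2 * (1 + ‖y‖ ^ 2) ^ (-(N : ℝ)))
    (hK₂ : K₂ = (∫ y : EuclideanSpace ℝ (Fin N), (1 + ‖y‖ ^ 2) ^ (-(N : ℝ)))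
      ^ (((N : ℝ) - 2) / (N : ℝ)))
    (hS : S = K₁ / K₂)
    (lam : ℝ) (hlam : A < lam) :
    ∃ u v : EuclideanSpace ℝ (Fin N) → ℝ,
      ContDiff ℝ (⊤ : ℕ∞) u ∧ HasCompactSupport u ∧ tsupport u ⊆ Ω ∧
      ContDiff ℝ (⊤ : ℕ∞) v ∧ HasCompactSupport v ∧ tsupport v ⊆ Ω ∧
      (∫ x in Ω, |u x| ^ q) ^ (1 / q) = 1 ∧
      (∫ x in Ω, |v x| ^ q) ^ (1 / q) = 1 ∧
      (1 / 2) * (∫ x in Ω, a x * ‖fderiv ℝ u x‖ ^ 2)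
        + (1 / 2) * (∫ x in Ω, b x * ‖fderiv ℝ v x‖ ^ 2)
        - lam * ∫ x in Ω, u x * v x
      < γ₀ * S := by
  subst hN hk hK₁ hK₂ hS
  have hq4 : q = 4 := by rw [hq]; norm_num
  have hfinrank : finrank ℝ (EuclideanSpace ℝ (Fin 4)) = 4 := finrank_euclideanSpace_fin
  have ha_expansion := isBigO_sub_of_tendsto_expansion two_ne_zero hexpa
  have hb_expansion := (isBigO_sub_of_tendsto_expansion (zero_lt_two.trans hl).ne'
    hexpb).trans_isLittleO (isLittleO_norm_sub_rpow_norm_sub_rpow zero_le_two hl)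
  simp only [haγ, hbγ, rpow_two] at ha_expansion hb_expansion
  rw [hq4, mul_integral_div_integral_rpow_eq_bubbleQuotient]
  exact stmt_6_general hfinrank (hΩo.mem_nhds hx₀) ha.aestronglyMeasurable
    hb.aestronglyMeasurable ha_expansion hb_expansion (hA.trans hlam)
end
end

section
/- Let N ≥ 1 be an integer, Ω ⊂ ℝ^N a nonempty bounded open set, x₀ ∈ Ω, and a, b : ℝ^N → ℝ continuously differentiable on Ω. Suppose there exists z₀ ∈ Ω such that ã(z₀) + b̃(z₀) < 0. Then for every M ∈ ℝ there exist smooth functions u, v compactly supported in Ω with ∫_Ω u(x)v(x) dx > 0 and (1/4)∫_Ω (ã(x)|∇u(x)|² + b̃(x)|∇v(x)|²) dx < M ∫_Ω u(x)v(x) dx; in other words, the infimum of φ_{a,b}(u,v) over such pairs is −∞. -/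
open MeasureTheory Real Filter Topology

noncomputable section

/-!
Taking `u = v` turns the quotient into that of the single weight `w = ã + b̃`, which is continuous
and negative at `z₀`, hence bounded above by some `c < 0` near `z₀`. Rescaling a fixed bump `f` to
`u(x) = f((x - z₀) / r)` multiplies `∫ u²` by `rᵈ` and `∫ |∇u|²` by `rᵈ⁻²`, where `d` is the
dimension, so the Rayleigh quotient `∫ |∇u|² / ∫ u²` grows like `r⁻²`. For small `r` the support of
`u` lies where `w ≤ c`, and `∫ w |∇u|² ≤ c ∫ |∇u|²` is then below any given multiple of `∫ u²`.
-/

section Rescaling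

variable {E F : Type*} [NormedAddCommGroup E] [NormedSpace ℝ E]

/-- The profile `f`, centred at the origin at unit scale, transported to the point `z` at scale `r`.
Because of the junk value `0⁻¹ = 0`, at `r = 0` this is the constant `f 0`. -/
def rescaleAt (f : E → F) (z : E) (r : ℝ) (x : E) : F :=
  f (r⁻¹ • (x - z))

variable {f : E → F} {z : E} {r : ℝ}

theorem hasCompactSupport_rescaleAt [Zero F] (hf : HasCompactSupport f) (hr : r ≠ 0) :
    HasCompactSupport (rescaleAt f z r) :=
  hf.comp_homeomorph ((Homeomorph.subRight z).trans (Homeomorph.smulOfNeZero r⁻¹ (inv_ne_zero hr)))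

theorem rescaleAt_ne_zero [Zero F] (hf : f ≠ 0) (hr : r ≠ 0) : rescaleAt f z r ≠ 0 := by
  obtain ⟨y, hy⟩ := Function.ne_iff.1 hf
  refine Function.ne_iff.2 ⟨z + r • y, ?_⟩
  simpa only [rescaleAt, add_sub_cancel_left, inv_smul_smul₀ hr, Pi.zero_apply] using hy

theorem eventually_tsupport_rescaleAt_subset [Zero F] {U : Set E} (hf : HasCompactSupport f)
    (hU : U ∈ 𝓝 z) : ∀ᶠ r in 𝓝[≠] (0 : ℝ), tsupport (rescaleAt f z r) ⊆ U := by
  have h_image : ∀ᶠ r in 𝓝 (0 : ℝ), ∀ y ∈ tsupport f, z + r • y ∈ U := by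
    refine hf.isCompact.eventually_forall_of_forall_eventually fun y _ ↦ ?_
    have h_cont : ContinuousAt (fun p : ℝ × E ↦ z + p.1 • p.2) (0, y) := by fun_prop
    exact h_cont.eventually_mem (by simpa only [zero_smul, add_zero] using hU)
  filter_upwards [h_image.filter_mono nhdsWithin_le_nhds, self_mem_nhdsWithin] with r hrU hr x hx
  have hy : r⁻¹ • (x - z) ∈ tsupport f :=
    tsupport_comp_subset_preimage f (f := fun x ↦ r⁻¹ • (x - z)) (by fun_prop) hx
  simpa only [smul_inv_smul₀ hr, add_sub_cancel] using hrU _ hy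

variable [NormedAddCommGroup F]

theorem contDiff_rescaleAt [NormedSpace ℝ F] {n : WithTop ℕ∞} (hf : ContDiff ℝ n f) :
    ContDiff ℝ n (rescaleAt f z r) :=
  hf.comp ((contDiff_id.sub contDiff_const).const_smul r⁻¹)

theorem fderiv_rescaleAt [NormedSpace ℝ F] :
    fderiv ℝ (rescaleAt f z r) = r⁻¹ • rescaleAt (fderiv ℝ f) z r := by
  funext x
  exact (fderiv_comp_sub z).trans (fderiv_comp_smul r⁻¹)

variable [FiniteDimensional ℝ E] [MeasurableSpace E] [BorelSpace E]
  (μ : Measure E) [μ.IsAddHaarMeasure]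

theorem integral_rescaleAt [NormedSpace ℝ F] :
    ∫ x, rescaleAt f z r x ∂μ = |r ^ Module.finrank ℝ E| • ∫ x, f x ∂μ :=
  (integral_sub_right_eq_self (fun x ↦ f (r⁻¹ • x)) z).trans (μ.integral_comp_inv_smul f r)

theorem integral_norm_sq_rescaleAt :
    ∫ x, ‖rescaleAt f z r x‖ ^ 2 ∂μ = |r ^ Module.finrank ℝ E| * ∫ x, ‖f x‖ ^ 2 ∂μ :=
  integral_rescaleAt (f := fun x ↦ ‖f x‖ ^ 2) μ

theorem integral_norm_fderiv_sq_rescaleAt [NormedSpace ℝ F] :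
    ∫ x, ‖fderiv ℝ (rescaleAt f z r) x‖ ^ 2 ∂μ =
      r⁻¹ ^ 2 * (|r ^ Module.finrank ℝ E| * ∫ x, ‖fderiv ℝ f x‖ ^ 2 ∂μ) := by
  simp only [fderiv_rescaleAt, Pi.smul_apply, norm_smul, mul_pow, norm_eq_abs, sq_abs,
    integral_const_mul, integral_norm_sq_rescaleAt]

end Rescaling

section Energy

variable {E F : Type*} [NormedAddCommGroup E] [NormedSpace ℝ E] [NormedAddCommGroup F]

theorem fderiv_ne_zero_of_hasCompactSupport [Nontrivial E] [NormedSpace ℝ F] {f : E → F}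
    (hf : Differentiable ℝ f) (hfc : HasCompactSupport f) (hf0 : f ≠ 0) : fderiv ℝ f ≠ 0 := by
  intro h_fderiv
  obtain ⟨y, hy⟩ : ∃ y, y ∉ tsupport f := (Set.ne_univ_iff_exists_notMem _).1 hfc.isCompact.ne_univ
  refine hf0 (funext fun x ↦ ?_)
  rw [is_const_of_fderiv_eq_zero hf (congrFun h_fderiv) x y]
  exact image_eq_zero_of_notMem_tsupport hy

theorem integral_norm_sq_pos {X : Type*} [TopologicalSpace X] [MeasurableSpace X]
    [OpensMeasurableSpace X] {μ : Measure X} [IsFiniteMeasureOnCompacts μ] [μ.IsOpenPosMeasure]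
    {f : X → F} (hf : Continuous f) (hfc : HasCompactSupport f) (hf0 : f ≠ 0) :
    0 < ∫ x, ‖f x‖ ^ 2 ∂μ := by
  obtain ⟨x, hx⟩ := Function.ne_iff.1 hf0
  exact (hf.norm.pow 2).integral_pos_of_hasCompactSupport_nonneg_nonzero (x := x)
    (hfc.comp_left (g := fun y : F ↦ ‖y‖ ^ 2) (by simp)) (fun _ ↦ by positivity) (by simpa using hx)

variable [NormedSpace ℝ F] [MeasurableSpace E] [BorelSpace E] (μ : Measure E)

theorem setIntegral_mul_norm_fderiv_sq_le [IsFiniteMeasureOnCompacts μ] {S : Set E} {w : E → ℝ}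
    {C : ℝ} {f : E → F} (hf : ContDiff ℝ 1 f) (hfc : HasCompactSupport f) (hfS : tsupport f ⊆ S)
    (hw : ContinuousOn w (tsupport f)) (hwC : ∀ x ∈ tsupport f, w x ≤ C) :
    ∫ x in S, w x * ‖fderiv ℝ f x‖ ^ 2 ∂μ ≤ C * ∫ x, ‖fderiv ℝ f x‖ ^ 2 ∂μ := by
  have h_zero : ∀ x ∉ tsupport f, ‖fderiv ℝ f x‖ ^ 2 = 0 := fun x hx ↦ by
    rw [image_eq_zero_of_notMem_tsupport fun h ↦ hx (tsupport_fderiv_subset ℝ h), norm_zero,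
      zero_pow two_ne_zero]
  have h_cont : Continuous fun x ↦ ‖fderiv ℝ f x‖ ^ 2 :=
    (hf.continuous_fderiv one_ne_zero).norm.pow 2
  have h_int {φ : E → ℝ} (hφ : ContinuousOn φ (tsupport f)) :
      IntegrableOn (fun x ↦ φ x * ‖fderiv ℝ f x‖ ^ 2) (tsupport f) μ :=
    (hφ.mul h_cont.continuousOn).integrableOn_compact hfc.isCompact
  calc ∫ x in S, w x * ‖fderiv ℝ f x‖ ^ 2 ∂μ
      = ∫ x in tsupport f, w x * ‖fderiv ℝ f x‖ ^ 2 ∂μ := by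
        rw [setIntegral_eq_integral_of_forall_compl_eq_zero fun x hx ↦ by
            rw [h_zero x (mt (@hfS x) hx), mul_zero],
          setIntegral_eq_integral_of_forall_compl_eq_zero fun x hx ↦ by rw [h_zero x hx, mul_zero]]
    _ ≤ ∫ x in tsupport f, C * ‖fderiv ℝ f x‖ ^ 2 ∂μ :=
        setIntegral_mono_on (h_int hw) (h_int continuousOn_const)
          (isClosed_tsupport f).measurableSet fun x hx ↦
          mul_le_mul_of_nonneg_right (hwC x hx) (by positivity)
    _ = C * ∫ x, ‖fderiv ℝ f x‖ ^ 2 ∂μ := by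
        rw [integral_const_mul, setIntegral_eq_integral_of_forall_compl_eq_zero h_zero]

variable [FiniteDimensional ℝ E] [Nontrivial E] [μ.IsAddHaarMeasure] {f : E → F} {z : E}

theorem eventually_mul_integral_norm_sq_rescaleAt_lt (hf : ContDiff ℝ 1 f)
    (hfc : HasCompactSupport f) (hf0 : f ≠ 0) (C : ℝ) :
    ∀ᶠ r in 𝓝[≠] (0 : ℝ), C * ∫ x, ‖rescaleAt f z r x‖ ^ 2 ∂μ <
      ∫ x, ‖fderiv ℝ (rescaleAt f z r) x‖ ^ 2 ∂μ := by
  set A := ∫ x, ‖f x‖ ^ 2 ∂μ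
  set B := ∫ x, ‖fderiv ℝ f x‖ ^ 2 ∂μ
  have hB : 0 < B :=
    integral_norm_sq_pos (hf.continuous_fderiv one_ne_zero) (hfc.fderiv ℝ)
      (fderiv_ne_zero_of_hasCompactSupport (hf.differentiable one_ne_zero) hfc hf0)
  have h_small : ∀ᶠ r in 𝓝 (0 : ℝ), r ^ 2 * (C * A) < B := by
    have h_cont : ContinuousAt (fun r : ℝ ↦ r ^ 2 * (C * A)) 0 := by fun_prop
    exact h_cont.eventually_lt continuousAt_const (by simpa using hB)
  filter_upwards [h_small.filter_mono nhdsWithin_le_nhds, self_mem_nhdsWithin] with r hrB hr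
  have hr : r ≠ 0 := hr
  rw [integral_norm_sq_rescaleAt, integral_norm_fderiv_sq_rescaleAt]
  calc C * (|r ^ Module.finrank ℝ E| * A)
      = r⁻¹ ^ 2 * (|r ^ Module.finrank ℝ E| * (r ^ 2 * (C * A))) := by field_simp
    _ < r⁻¹ ^ 2 * (|r ^ Module.finrank ℝ E| * B) := by gcongr

theorem eventually_setIntegral_mul_norm_fderiv_sq_rescaleAt_lt {Ω : Set E} {w : E → ℝ}
    (hf : ContDiff ℝ 1 f) (hfc : HasCompactSupport f) (hf0 : f ≠ 0) (hΩ : Ω ∈ 𝓝 z)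
    (hw : ContinuousOn w Ω) (hwz : w z < 0) (M : ℝ) :
    ∀ᶠ r in 𝓝[≠] (0 : ℝ), ∫ x in Ω, w x * ‖fderiv ℝ (rescaleAt f z r) x‖ ^ 2 ∂μ <
      M * ∫ x, ‖rescaleAt f z r x‖ ^ 2 ∂μ := by
  obtain ⟨c, hwc, hc⟩ : ∃ c, w z < c ∧ c < 0 := exists_between hwz
  have h_nhds : {x | w x < c ∧ x ∈ Ω} ∈ 𝓝 z :=
    ((hw.continuousAt hΩ).eventually_lt continuousAt_const hwc).and hΩ
  filter_upwards [eventually_tsupport_rescaleAt_subset hfc h_nhds,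
    eventually_mul_integral_norm_sq_rescaleAt_lt μ hf hfc hf0 (M / c), self_mem_nhdsWithin]
    with r h_supp h_rayleigh hr
  have h_suppΩ : tsupport (rescaleAt f z r) ⊆ Ω := fun x hx ↦ (h_supp hx).2
  calc ∫ x in Ω, w x * ‖fderiv ℝ (rescaleAt f z r) x‖ ^ 2 ∂μ
      ≤ c * ∫ x, ‖fderiv ℝ (rescaleAt f z r) x‖ ^ 2 ∂μ :=
        setIntegral_mul_norm_fderiv_sq_le μ (contDiff_rescaleAt hf)
          (hasCompactSupport_rescaleAt hfc hr) h_suppΩ (hw.mono h_suppΩ)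
          fun x hx ↦ (h_supp hx).1.le
    _ < c * (M / c * ∫ x, ‖rescaleAt f z r x‖ ^ 2 ∂μ) := mul_lt_mul_of_neg_left h_rayleigh hc
    _ = M * ∫ x, ‖rescaleAt f z r x‖ ^ 2 ∂μ := by rw [← mul_assoc, mul_div_cancel₀ M hc.ne]

end Energy

theorem exists_contDiff_setIntegral_mul_norm_fderiv_sq_lt {E : Type*} [NormedAddCommGroup E]
    [NormedSpace ℝ E] [FiniteDimensional ℝ E] [Nontrivial E] [MeasurableSpace E] [BorelSpace E]
    (μ : Measure E) [μ.IsAddHaarMeasure] {Ω : Set E} {w : E → ℝ} {z : E} (hΩ : Ω ∈ 𝓝 z)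
    (hw : ContinuousOn w Ω) (hwz : w z < 0) (M : ℝ) :
    ∃ u : E → ℝ, ContDiff ℝ (⊤ : ℕ∞) u ∧ HasCompactSupport u ∧ tsupport u ⊆ Ω ∧
      0 < (∫ x in Ω, u x * u x ∂μ) ∧
      ∫ x in Ω, w x * ‖fderiv ℝ u x‖ ^ 2 ∂μ < M * ∫ x in Ω, u x * u x ∂μ := by
  obtain ⟨f, -, hfc, hf, -, hf_one⟩ :=
    exists_contDiff_tsupport_subset (n := ⊤) (univ_mem (f := 𝓝 (0 : E)))
  have hf0 : f ≠ 0 := Function.ne_iff.2 ⟨0, hf_one.trans_ne one_ne_zero⟩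
  obtain ⟨r, h_lt, h_supp, hr⟩ := ((eventually_setIntegral_mul_norm_fderiv_sq_rescaleAt_lt μ
    (hf.of_le (by simp)) hfc hf0 hΩ hw hwz M).and
    ((eventually_tsupport_rescaleAt_subset hfc hΩ).and self_mem_nhdsWithin)).exists
  have hu := contDiff_rescaleAt (z := z) (r := r) hf
  have huc : HasCompactSupport (rescaleAt f z r) := hasCompactSupport_rescaleAt hfc hr
  have h_sq : ∫ x in Ω, rescaleAt f z r x * rescaleAt f z r x ∂μ =
      ∫ x, ‖rescaleAt f z r x‖ ^ 2 ∂μ := by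
    simp only [norm_eq_abs, sq_abs, ← sq]
    refine setIntegral_eq_integral_of_forall_compl_eq_zero fun x hx ↦ ?_
    rw [image_eq_zero_of_notMem_tsupport (mt (@h_supp x) hx), zero_pow two_ne_zero]
  refine ⟨rescaleAt f z r, hu, huc, h_supp, ?_, ?_⟩ <;> rw [h_sq]
  · exact integral_norm_sq_pos hu.continuous huc (rescaleAt_ne_zero hf0 hr)
  · exact h_lt

theorem stmt_15_general {E : Type*} [NormedAddCommGroup E] [NormedSpace ℝ E]
    [FiniteDimensional ℝ E] [Nontrivial E] [MeasurableSpace E] [BorelSpace E]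
    (μ : Measure E) [μ.IsAddHaarMeasure] {Ω : Set E} {α β : E → ℝ} {z : E} (hΩ : Ω ∈ 𝓝 z)
    (hα : ContinuousOn α Ω) (hβ : ContinuousOn β Ω) (hneg : α z + β z < 0) (M : ℝ) :
    ∃ u v : E → ℝ,
      ContDiff ℝ (⊤ : ℕ∞) u ∧ HasCompactSupport u ∧ tsupport u ⊆ Ω ∧
      ContDiff ℝ (⊤ : ℕ∞) v ∧ HasCompactSupport v ∧ tsupport v ⊆ Ω ∧
      0 < (∫ x in Ω, u x * v x ∂μ) ∧
      (1 / 4) * (∫ x in Ω, (α x * ‖fderiv ℝ u x‖ ^ 2 + β x * ‖fderiv ℝ v x‖ ^ 2) ∂μ)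
        < M * ∫ x in Ω, u x * v x ∂μ := by
  obtain ⟨u, hu, huc, huΩ, hu_pos, hu_lt⟩ :=
    exists_contDiff_setIntegral_mul_norm_fderiv_sq_lt μ hΩ (hα.add hβ) hneg (4 * M)
  refine ⟨u, u, hu, huc, huΩ, hu, huc, huΩ, hu_pos, ?_⟩
  simp only [Pi.add_apply, add_mul] at hu_lt
  linarith

theorem stmt_15
    (N : ℕ) (hN : 1 ≤ N)
    (Ω : Set (EuclideanSpace ℝ (Fin N)))
    (hΩo : IsOpen Ω) (hΩb : Bornology.IsBounded Ω) (hΩne : Ω.Nonempty)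
    (x₀ : EuclideanSpace ℝ (Fin N)) (hx₀ : x₀ ∈ Ω)
    (a b : EuclideanSpace ℝ (Fin N) → ℝ)
    (ha : ContDiffOn ℝ 1 a Ω) (hb : ContDiffOn ℝ 1 b Ω)
    (z₀ : EuclideanSpace ℝ (Fin N)) (hz₀ : z₀ ∈ Ω)
    (hneg : fderiv ℝ a z₀ (z₀ - x₀) + fderiv ℝ b z₀ (z₀ - x₀) < 0) :
    ∀ M : ℝ, ∃ u v : EuclideanSpace ℝ (Fin N) → ℝ,
      ContDiff ℝ (⊤ : ℕ∞) u ∧ HasCompactSupport u ∧ tsupport u ⊆ Ω ∧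
      ContDiff ℝ (⊤ : ℕ∞) v ∧ HasCompactSupport v ∧ tsupport v ⊆ Ω ∧
      0 < (∫ x in Ω, u x * v x) ∧
      (1 / 4) * (∫ x in Ω,
          (fderiv ℝ a x (x - x₀) * ‖fderiv ℝ u x‖ ^ 2
            + fderiv ℝ b x (x - x₀) * ‖fderiv ℝ v x‖ ^ 2))
        < M * ∫ x in Ω, u x * v x := by
  have : Nonempty (Fin N) := ⟨⟨0, hN⟩⟩
  have h_disp : ContinuousOn (fun x ↦ x - x₀) Ω := by fun_prop
  exact stmt_15_general volume (hΩo.mem_nhds hz₀)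
    ((ha.continuousOn_fderiv_of_isOpen hΩo le_rfl).clm_apply h_disp)
    ((hb.continuousOn_fderiv_of_isOpen hΩo le_rfl).clm_apply h_disp) hneg
end
end

section
/- Let N ≥ 1 be an integer, Ω ⊂ ℝ^N a nonempty bounded open set, x₀ ∈ Ω, and a, b : ℝ^N → ℝ continuously differentiable on Ω. Suppose a admits the expansion of order k at x₀ with coefficient A_k > 0 and b admits the expansion of order l at x₀ with coefficient B_l > 0, where k > 2 and l > 2, and that ã(x) ≥ 0 and b̃(x) ≥ 0 for almost every x ∈ Ω. Then the infimum of φ_{a,b}(u,v) over pairs of smooth functions u, v compactly supported in Ω with ∫_Ω u v dx > 0 equals 0; that is, φ_{a,b}(u,v) ≥ 0 for every such pair, and for every δ > 0 there exists such a pair with φ_{a,b}(u,v) < δ. -/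
open MeasureTheory Real Filter Topology

noncomputable section

/-!
Test with `u = v = φ((x - x₀) / t)` for a fixed bump `φ` and small `t`. Writing `ψ = ‖∇φ‖²`,
`f(x) = a(x) - a(x₀) + b(x) - b(x₀)` and `G(t) = ∫ f(x₀ + t y) ψ(y) dy`, the change of variables
`x = x₀ + t y` turns the quotient into `G'(t) / (4 t ∫ φ²)`. As `k, l > 2`, the expansions give
`f(x) = o(|x - x₀|²)`, hence `G(t) = o(t²)`, and the mean value theorem on `[t, 2t]` produces
arbitrarily small `s` at which `G'(s) / s` is as small as we like.
-/

open Asymptotics Set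

section Calculus

theorem isLittleO_norm_sub_pow_of_tendsto_rpow {E : Type*} [NormedAddCommGroup E] {a : E → ℝ}
    {x₀ : E} {k A : ℝ} {n : ℕ} (hk : n < k)
    (h : Tendsto (fun x => (a x - a x₀ - A * ‖x - x₀‖ ^ k) / ‖x - x₀‖ ^ k) (𝓝[≠] x₀) (𝓝 0)) :
    (fun x => a x - a x₀) =o[𝓝 x₀] fun x => ‖x - x₀‖ ^ n := by
  have hpos : ∀ᶠ x in 𝓝[≠] x₀, 0 < ‖x - x₀‖ := by
    filter_upwards [self_mem_nhdsWithin] with x hx using norm_sub_pos_iff.2 hx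
  have hremainder : (fun x => a x - a x₀ - A * ‖x - x₀‖ ^ k) =o[𝓝[≠] x₀]
      fun x => ‖x - x₀‖ ^ k :=
    (isLittleO_iff_tendsto' <| hpos.mono fun x hx h0 => absurd h0 (rpow_pos_of_pos hx k).ne').2 h
  have hbigO : (fun x => a x - a x₀) =O[𝓝[≠] x₀] fun x => ‖x - x₀‖ ^ k := by
    simpa using hremainder.isBigO.add ((isBigO_refl _ _).const_mul_left A)
  have hrpow : Tendsto (fun x => ‖x - x₀‖ ^ (k - n)) (𝓝[≠] x₀) (𝓝 0) := by
    have hcont : ContinuousAt (fun x => ‖x - x₀‖ ^ (k - n)) x₀ :=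
      ContinuousAt.rpow_const (by fun_prop) (Or.inr (sub_pos.2 hk).le)
    simpa [ContinuousAt, zero_rpow (sub_pos.2 hk).ne'] using
      hcont.tendsto.mono_left (nhdsWithin_le_nhds (s := {x₀}ᶜ))
  have hpow : (fun x => ‖x - x₀‖ ^ k) =o[𝓝[≠] x₀] fun x => ‖x - x₀‖ ^ n :=
    (isLittleO_iff_tendsto' <| hpos.mono fun x hx h0 => absurd h0 (pow_pos hx n).ne').2 <|
      hrpow.congr' <| hpos.mono fun x hx => by rw [rpow_sub hx, rpow_natCast]
  simpa [insert_eq] using (hbigO.trans_isLittleO hpow).insert (by simp)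

theorem frequently_lt_mul_of_isLittleO_sq {g g' : ℝ → ℝ}
    (hg : ∀ᶠ t in 𝓝[>] 0, HasDerivAt g (g' t) t) (ho : g =o[𝓝[>] 0] fun t => t ^ 2)
    {η : ℝ} (hη : 0 < η) : ∃ᶠ t in 𝓝[>] 0, g' t < η * t := by
  intro hlarge
  have hsmall := ho.bound (show 0 < η / 6 by positivity)
  obtain ⟨δ, hδ, hIoo⟩ := mem_nhdsGT_iff_exists_Ioo_subset.1 (hg.and (hsmall.and hlarge))
  rw [mem_Ioi] at hδ
  have hderiv : ∀ t ∈ Icc (δ / 3) (2 * δ / 3), HasDerivAt g (g' t) t := fun t ht =>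
    (hIoo ⟨by linarith [ht.1], by linarith [ht.2]⟩).1
  obtain ⟨s, hs, hslope⟩ := exists_hasDerivAt_eq_slope g g' (show δ / 3 < 2 * δ / 3 by linarith)
    (fun t ht => (hderiv t ht).continuousAt.continuousWithinAt)
    (fun t ht => hderiv t (Ioo_subset_Icc_self ht))
  obtain ⟨-, -, hs_large⟩ := hIoo (show s ∈ Ioo 0 δ from ⟨by linarith [hs.1], by linarith [hs.2]⟩)
  obtain ⟨-, hleft, -⟩ := hIoo (show δ / 3 ∈ Ioo 0 δ from ⟨by linarith, by linarith⟩)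
  obtain ⟨-, hright, -⟩ := hIoo (show 2 * δ / 3 ∈ Ioo 0 δ from ⟨by linarith, by linarith⟩)
  simp only [norm_eq_abs, abs_pow, sq_abs, abs_le] at hleft hright
  rw [eq_div_iff (by linarith)] at hslope
  have hupper : g (2 * δ / 3) - g (δ / 3) < η * (δ / 3) * (δ / 3) := by
    linarith [hleft.1, hright.2, show 0 < η * δ ^ 2 by positivity]
  have hlower : η * (δ / 3) ≤ g' s :=
    (mul_le_mul_of_nonneg_left hs.1.le hη.le).trans (not_lt.1 hs_large)
  have := mul_le_mul_of_nonneg_right hlower (show 0 ≤ δ / 3 by positivity)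
  linarith

variable {α G : Type*} [TopologicalSpace α] [T2Space α] [MeasurableSpace α]
  [OpensMeasurableSpace α] {μ : Measure α} [IsFiniteMeasureOnCompacts μ]
  [NormedAddCommGroup G] [NormedSpace ℝ G]

theorem hasDerivAt_setIntegral_of_isCompact {K : Set α} (hK : IsCompact K)
    {F F' : ℝ → α → G} {t : ℝ} (hF : ∀ᶠ s in 𝓝 t, ContinuousOn (F s) K)
    (hderiv : ∀ᶠ s in 𝓝 t, ∀ y ∈ K, HasDerivAt (fun s => F s y) (F' s y) s)
    (hF' : ∀ y ∈ K, ContinuousAt F'.uncurry (t, y)) :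
    HasDerivAt (fun s => ∫ y in K, F s y ∂μ) (∫ y in K, F' t y ∂μ) t := by
  have hF't : ContinuousOn (F' t) K := fun y hy =>
    ((hF' y hy).comp (f := fun y => (t, y)) (by fun_prop)).continuousWithinAt
  have hclose : ∀ᶠ s in 𝓝 t, ∀ y ∈ K, ‖F' s y‖ ≤ ‖F' t y‖ + 1 := by
    refine hK.eventually_forall_of_forall_eventually fun y hy => ?_
    have hslice : ContinuousAt (fun p : ℝ × α => F' t p.2) (t, y) :=
      (hF' y hy).comp_of_eq (f := fun p : ℝ × α => (t, p.2)) (by fun_prop) rfl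
    have hdiff : ∀ᶠ p in 𝓝 (t, y), ‖F'.uncurry p‖ < ‖F' t p.2‖ + 1 :=
      (hF' y hy).norm.eventually_lt (hslice.norm.add_const 1) (lt_add_one _)
    exact hdiff.mono fun p hp => hp.le
  have hKm : MeasurableSet K := hK.measurableSet
  refine (hasDerivAt_integral_of_dominated_loc_of_deriv_le (hderiv.and hclose)
    (bound := fun y => ‖F' t y‖ + 1) (F' := F')
    (hF.mono fun s hs => (hs.integrableOn_compact hK).aestronglyMeasurable)
    (hF.self_of_nhds.integrableOn_compact hK)
    (hF't.integrableOn_compact hK).aestronglyMeasurable ?_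
    ((hF't.norm.add continuousOn_const).integrableOn_compact hK) ?_).2
  · filter_upwards [ae_restrict_mem hKm] with y hy s hs using hs.2 y hy
  · filter_upwards [ae_restrict_mem hKm] with y hy s hs using hs.1 y hy

end Calculus

section Dilation

variable {E : Type*} [NormedAddCommGroup E] [NormedSpace ℝ E] {x₀ : E}

theorem eventually_forall_mem_add_smul {K : Set E} (hK : IsCompact K) {p : E → Prop}
    (hp : ∀ᶠ x in 𝓝 x₀, p x) : ∀ᶠ t : ℝ in 𝓝 0, ∀ y ∈ K, p (x₀ + t • y) := by
  refine hK.eventually_forall_of_forall_eventually fun y _ => ?_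
  have hcont : Tendsto (fun q : ℝ × E => x₀ + q.1 • q.2) (𝓝 (0, y)) (𝓝 x₀) :=
    Continuous.tendsto' (by fun_prop) _ _ (by simp)
  exact hcont.eventually hp

variable [MeasurableSpace E] [BorelSpace E] {μ : Measure E} [IsFiniteMeasureOnCompacts μ]

theorem isLittleO_integral_comp_add_smul_mul {f ψ : E → ℝ} {n : ℕ}
    (hf : f =o[𝓝 x₀] fun x => ‖x - x₀‖ ^ n) (hψ : Continuous ψ) (hψc : HasCompactSupport ψ) :
    (fun t : ℝ => ∫ y, f (x₀ + t • y) * ψ y ∂μ) =o[𝓝 0] fun t => t ^ n := by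
  set C := ∫ y, ‖y‖ ^ n * ‖ψ y‖ ∂μ
  have hC : 0 < C + 1 := add_pos_of_nonneg_of_pos (integral_nonneg fun y => by positivity) one_pos
  have hint : Integrable (fun y => ‖y‖ ^ n * ‖ψ y‖) μ :=
    Continuous.integrable_of_hasCompactSupport (by fun_prop) hψc.norm.mul_left
  refine isLittleO_iff.2 fun ε hε => ?_
  have hbound := hf.bound (div_pos hε hC)
  filter_upwards [eventually_forall_mem_add_smul hψc hbound] with t ht
  calc ‖∫ y, f (x₀ + t • y) * ψ y ∂μ‖
      ≤ ∫ y, ε / (C + 1) * ‖t ^ n‖ * (‖y‖ ^ n * ‖ψ y‖) ∂μ := by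
        refine norm_integral_le_of_norm_le (hint.const_mul _) (.of_forall fun y => ?_)
        by_cases hy : y ∈ tsupport ψ
        · have hfy := ht y hy
          rw [add_sub_cancel_left, norm_pow, norm_norm, norm_smul, mul_pow, ← norm_pow] at hfy
          rw [norm_mul]
          calc ‖f (x₀ + t • y)‖ * ‖ψ y‖
              ≤ ε / (C + 1) * (‖t ^ n‖ * ‖y‖ ^ n) * ‖ψ y‖ := by gcongr
            _ = ε / (C + 1) * ‖t ^ n‖ * (‖y‖ ^ n * ‖ψ y‖) := by ring
        · simp [image_eq_zero_of_notMem_tsupport hy]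
    _ = ε * ‖t ^ n‖ * (C / (C + 1)) := by rw [integral_const_mul]; ring
    _ ≤ ε * ‖t ^ n‖ :=
        mul_le_of_le_one_right (by positivity) (div_le_one_of_le₀ (by simp) hC.le)

theorem hasDerivAt_integral_comp_add_smul_mul {f ψ : E → ℝ} {f' : E → E →L[ℝ] ℝ} {t : ℝ}
    (hψ : Continuous ψ) (hψc : HasCompactSupport ψ)
    (hf : ∀ᶠ s in 𝓝 t, ∀ y ∈ tsupport ψ, HasFDerivAt f (f' (x₀ + s • y)) (x₀ + s • y))
    (hf' : ∀ y ∈ tsupport ψ, ContinuousAt f' (x₀ + t • y)) :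
    HasDerivAt (fun s : ℝ => ∫ y, f (x₀ + s • y) * ψ y ∂μ)
      (∫ y, f' (x₀ + t • y) y * ψ y ∂μ) t := by
  have hrestrict : ∀ g : E → ℝ, ∫ y in tsupport ψ, g y * ψ y ∂μ = ∫ y, g y * ψ y ∂μ := fun g =>
    setIntegral_eq_integral_of_forall_compl_eq_zero fun y hy => by
      rw [image_eq_zero_of_notMem_tsupport hy, mul_zero]
  simp_rw [← hrestrict]
  refine hasDerivAt_setIntegral_of_isCompact (F := fun s y => f (x₀ + s • y) * ψ y)
    (F' := fun s y => f' (x₀ + s • y) y * ψ y) hψc ?_ ?_ fun y hy => ?_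
  · filter_upwards [hf] with s hs y hy
    have hcomp : ContinuousAt (fun y => f (x₀ + s • y)) y :=
      (hs y hy).continuousAt.comp (f := fun y => x₀ + s • y) (by fun_prop)
    exact (hcomp.mul hψ.continuousAt).continuousWithinAt
  · filter_upwards [hf] with s hs y hy
    have hline : HasDerivAt (fun s : ℝ => x₀ + s • y) y s := by
      simpa using ((hasDerivAt_id s).smul_const y).const_add x₀
    exact ((hs y hy).comp_hasDerivAt s hline).mul_const _
  · have hcomp : ContinuousAt (fun q : ℝ × E => f' (x₀ + q.1 • q.2)) (t, y) :=
      (hf' y hy).comp_of_eq (f := fun q : ℝ × E => x₀ + q.1 • q.2) (by fun_prop) rfl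
    exact (hcomp.clm_apply continuousAt_snd).mul (hψ.comp continuous_snd).continuousAt

theorem frequently_integral_fderiv_comp_add_smul_mul_lt {f ψ : E → ℝ} {f' : E → E →L[ℝ] ℝ}
    (hf : ∀ᶠ x in 𝓝 x₀, HasFDerivAt f (f' x) x) (hf' : ∀ᶠ x in 𝓝 x₀, ContinuousAt f' x)
    (hfo : f =o[𝓝 x₀] fun x => ‖x - x₀‖ ^ 2) (hψ : Continuous ψ) (hψc : HasCompactSupport ψ)
    {η : ℝ} (hη : 0 < η) :
    ∃ᶠ t : ℝ in 𝓝[>] 0, ∫ y, f' (x₀ + t • y) y * ψ y ∂μ < η * t := by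
  refine frequently_lt_mul_of_isLittleO_sq ?_
    ((isLittleO_integral_comp_add_smul_mul hfo hψ hψc (μ := μ)).mono nhdsWithin_le_nhds) hη
  filter_upwards [nhdsWithin_le_nhds (eventually_forall_mem_add_smul hψc hf).eventually_nhds,
    nhdsWithin_le_nhds (eventually_forall_mem_add_smul hψc hf')] with t ht ht'
  exact hasDerivAt_integral_comp_add_smul_mul hψ hψc ht ht'

end Dilation

section Rescaling

variable {E : Type*} [NormedAddCommGroup E] [NormedSpace ℝ E] {x₀ : E} {t : ℝ} {φ : E → ℝ}

/-- The profile `φ` concentrated at scale `t` around the point `x₀`. -/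
def rescale (x₀ : E) (t : ℝ) (φ : E → ℝ) (x : E) : ℝ := φ (t⁻¹ • (x - x₀))

theorem rescale_add_smul (x₀ : E) (ht : t ≠ 0) (φ : E → ℝ) (y : E) :
    rescale x₀ t φ (x₀ + t • y) = φ y := by
  simp [rescale, inv_smul_smul₀ ht]

theorem contDiff_rescale {n : WithTop ℕ∞} (hφ : ContDiff ℝ n φ) :
    ContDiff ℝ n (rescale x₀ t φ) :=
  hφ.comp (g := φ) (by fun_prop)

theorem fderiv_rescale (x₀ : E) (t : ℝ) (φ : E → ℝ) (x : E) :
    fderiv ℝ (rescale x₀ t φ) x = t⁻¹ • fderiv ℝ φ (t⁻¹ • (x - x₀)) := by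
  unfold rescale
  rw [fderiv_comp_sub (f := fun z => φ (t⁻¹ • z)), fderiv_comp_smul]

theorem tsupport_rescale (x₀ : E) (ht : t ≠ 0) (φ : E → ℝ) :
    tsupport (rescale x₀ t φ) = (fun y => x₀ + t • y) '' tsupport φ := by
  let e : E ≃ₜ E := (Homeomorph.smulOfNeZero t ht).trans (Homeomorph.addLeft x₀)
  have he : rescale x₀ t φ = φ ∘ e.symm := by
    ext x
    obtain ⟨y, rfl⟩ := e.surjective x
    rw [Function.comp_apply, e.symm_apply_apply]
    exact rescale_add_smul x₀ ht φ y
  rw [he, tsupport_comp_eq_preimage, ← e.image_eq_preimage_symm]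
  rfl

theorem hasCompactSupport_rescale (ht : t ≠ 0) (hφ : HasCompactSupport φ) :
    HasCompactSupport (rescale x₀ t φ) := by
  rw [HasCompactSupport, tsupport_rescale x₀ ht]
  exact hφ.isCompact.image (by fun_prop)

theorem eventually_tsupport_rescale_subset {Ω : Set E} (hΩ : Ω ∈ 𝓝 x₀) (hφ : HasCompactSupport φ) :
    ∀ᶠ t in 𝓝[>] 0, tsupport (rescale x₀ t φ) ⊆ Ω := by
  filter_upwards [self_mem_nhdsWithin,
    nhdsWithin_le_nhds (eventually_forall_mem_add_smul hφ hΩ)] with t ht hmem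
  rw [tsupport_rescale x₀ (ne_of_gt ht)]
  exact image_subset_iff.2 hmem

theorem integral_eq_pow_mul_integral_comp_add_smul [FiniteDimensional ℝ E] [MeasurableSpace E]
    [BorelSpace E] (μ : Measure E) [μ.IsAddHaarMeasure] (x₀ : E) (ht : 0 < t) (F : E → ℝ) :
    ∫ x, F x ∂μ = t ^ Module.finrank ℝ E * ∫ y, F (x₀ + t • y) ∂μ := by
  rw [Measure.integral_comp_smul_of_nonneg μ (fun z => F (x₀ + z)) t (hR := ht.le),
    integral_add_left_eq_self F x₀, smul_eq_mul, mul_inv_cancel_left₀ (by positivity)]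

end Rescaling

section Quotient

variable {E : Type*} [NormedAddCommGroup E] [NormedSpace ℝ E] [MeasurableSpace E]
  {μ : Measure E} {Ω : Set E} {x₀ : E} {a b : E → ℝ}

/-- The quotient `φ_{a,b}(u, v)` on `Ω`. The weights `ã`, `b̃` are the radial derivatives
`fderiv ℝ a x (x - x₀)`, `fderiv ℝ b x (x - x₀)`, and the gradients of `u`, `v` are measured in the
dual norm. -/
def weightedQuotient (μ : Measure E) (Ω : Set E) (x₀ : E) (a b u v : E → ℝ) : ℝ :=
  (1 / 4) * (∫ x in Ω, (fderiv ℝ a x (x - x₀) * ‖fderiv ℝ u x‖ ^ 2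
    + fderiv ℝ b x (x - x₀) * ‖fderiv ℝ v x‖ ^ 2) ∂μ) / ∫ x in Ω, u x * v x ∂μ

theorem weightedQuotient_nonneg {u v : E → ℝ}
    (ha : ∀ᵐ x ∂μ.restrict Ω, 0 ≤ fderiv ℝ a x (x - x₀))
    (hb : ∀ᵐ x ∂μ.restrict Ω, 0 ≤ fderiv ℝ b x (x - x₀)) (huv : 0 ≤ ∫ x in Ω, u x * v x ∂μ) :
    0 ≤ weightedQuotient μ Ω x₀ a b u v := by
  have henergy : 0 ≤ ∫ x in Ω, (fderiv ℝ a x (x - x₀) * ‖fderiv ℝ u x‖ ^ 2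
      + fderiv ℝ b x (x - x₀) * ‖fderiv ℝ v x‖ ^ 2) ∂μ := by
    refine integral_nonneg_of_ae ?_
    filter_upwards [ha, hb] with x hax hbx
    simp only [Pi.zero_apply]
    positivity
  unfold weightedQuotient
  positivity

variable [BorelSpace E] [FiniteDimensional ℝ E] [μ.IsAddHaarMeasure] {t : ℝ} {φ : E → ℝ}

theorem setIntegral_rescale_mul_self (ht : 0 < t) (hΩ : tsupport (rescale x₀ t φ) ⊆ Ω) :
    ∫ x in Ω, rescale x₀ t φ x * rescale x₀ t φ x ∂μ =
      t ^ Module.finrank ℝ E * ∫ y, φ y * φ y ∂μ := by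
  rw [setIntegral_eq_integral_of_forall_compl_eq_zero fun x hx => by
      rw [image_eq_zero_of_notMem_tsupport fun h => hx (hΩ h), zero_mul],
    integral_eq_pow_mul_integral_comp_add_smul μ x₀ ht]
  simp only [rescale_add_smul x₀ ht.ne']

theorem setIntegral_energy_rescale (ht : 0 < t) (hΩ : tsupport (rescale x₀ t φ) ⊆ Ω)
    (w : E → E →L[ℝ] ℝ) :
    ∫ x in Ω, w x (x - x₀) * ‖fderiv ℝ (rescale x₀ t φ) x‖ ^ 2 ∂μ =
      t ^ Module.finrank ℝ E * (t⁻¹ * ∫ y, w (x₀ + t • y) y * ‖fderiv ℝ φ y‖ ^ 2 ∂μ) := by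
  rw [setIntegral_eq_integral_of_forall_compl_eq_zero fun x hx => by
      simp [fderiv_of_notMem_tsupport (𝕜 := ℝ) fun h => hx (hΩ h)],
    integral_eq_pow_mul_integral_comp_add_smul μ x₀ ht, ← integral_const_mul t⁻¹]
  congr 1
  refine integral_congr_ae (.of_forall fun y => ?_)
  simp only [fderiv_rescale, add_sub_cancel_left, inv_smul_smul₀ ht.ne', map_smul, smul_eq_mul,
    norm_smul, norm_inv, norm_of_nonneg ht.le]
  field_simp

theorem weightedQuotient_rescale (ht : 0 < t) (hΩ : tsupport (rescale x₀ t φ) ⊆ Ω) :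
    weightedQuotient μ Ω x₀ a b (rescale x₀ t φ) (rescale x₀ t φ) =
      (∫ y, (fderiv ℝ a + fderiv ℝ b) (x₀ + t • y) y * ‖fderiv ℝ φ y‖ ^ 2 ∂μ) /
        (4 * t * ∫ y, φ y * φ y ∂μ) := by
  have henergy := setIntegral_energy_rescale (μ := μ) ht hΩ (fderiv ℝ a + fderiv ℝ b)
  simp only [Pi.add_apply, add_apply, add_mul] at henergy ⊢
  rw [weightedQuotient, henergy, setIntegral_rescale_mul_self ht hΩ]
  field_simp

theorem frequently_weightedQuotient_rescale_lt
    (ha : ContDiffAt ℝ 1 a x₀) (hb : ContDiffAt ℝ 1 b x₀)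
    (hao : (fun x => a x - a x₀) =o[𝓝 x₀] fun x => ‖x - x₀‖ ^ 2)
    (hbo : (fun x => b x - b x₀) =o[𝓝 x₀] fun x => ‖x - x₀‖ ^ 2) (hΩ : Ω ∈ 𝓝 x₀)
    (hφ : ContDiff ℝ 1 φ) (hφc : HasCompactSupport φ) (hφpos : 0 < ∫ y, φ y * φ y ∂μ)
    {δ : ℝ} (hδ : 0 < δ) :
    ∃ᶠ t in 𝓝[>] 0, weightedQuotient μ Ω x₀ a b (rescale x₀ t φ) (rescale x₀ t φ) < δ := by
  have hf : ∀ᶠ x in 𝓝 x₀, HasFDerivAt (fun x => (a x - a x₀) + (b x - b x₀))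
      ((fderiv ℝ a + fderiv ℝ b) x) x := by
    filter_upwards [ha.eventually (by simp), hb.eventually (by simp)] with x hax hbx
    exact ((hax.differentiableAt one_ne_zero).hasFDerivAt.sub_const _).add
      ((hbx.differentiableAt one_ne_zero).hasFDerivAt.sub_const _)
  have hf' : ∀ᶠ x in 𝓝 x₀, ContinuousAt (fderiv ℝ a + fderiv ℝ b) x := by
    filter_upwards [ha.eventually (by simp), hb.eventually (by simp)] with x hax hbx
    exact (hax.continuousAt_fderiv one_ne_zero).add (hbx.continuousAt_fderiv one_ne_zero)
  have hψ : Continuous fun y => ‖fderiv ℝ φ y‖ ^ 2 :=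
    (hφ.continuous_fderiv one_ne_zero).norm.pow 2
  have hψc : HasCompactSupport fun y => ‖fderiv ℝ φ y‖ ^ 2 :=
    (hφc.fderiv (𝕜 := ℝ)).comp_left (g := fun L => ‖L‖ ^ 2) (by simp)
  have hfreq := frequently_integral_fderiv_comp_add_smul_mul_lt (μ := μ) hf hf' (hao.add hbo)
    hψ hψc (show 0 < δ * (4 * ∫ y, φ y * φ y ∂μ) by positivity)
  refine (hfreq.and_eventually <|
    (eventually_tsupport_rescale_subset hΩ hφc).and self_mem_nhdsWithin).mono ?_
  rintro t ⟨hlt, hsupp, ht⟩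
  rw [weightedQuotient_rescale ht hsupp, div_lt_iff₀ (by positivity)]
  linarith

end Quotient

theorem stmt_16_general {E : Type*} [NormedAddCommGroup E] [NormedSpace ℝ E] [FiniteDimensional ℝ E]
    [MeasurableSpace E] [BorelSpace E] {μ : Measure E} [μ.IsAddHaarMeasure] {Ω : Set E} {x₀ : E}
    (hΩ : Ω ∈ 𝓝 x₀) {a b : E → ℝ} (ha : ContDiffAt ℝ 1 a x₀) (hb : ContDiffAt ℝ 1 b x₀)
    (hao : (fun x => a x - a x₀) =o[𝓝 x₀] fun x => ‖x - x₀‖ ^ 2)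
    (hbo : (fun x => b x - b x₀) =o[𝓝 x₀] fun x => ‖x - x₀‖ ^ 2)
    (hatpos : ∀ᵐ x ∂μ.restrict Ω, 0 ≤ fderiv ℝ a x (x - x₀))
    (hbtpos : ∀ᵐ x ∂μ.restrict Ω, 0 ≤ fderiv ℝ b x (x - x₀)) :
    (∀ u v : E → ℝ,
      ContDiff ℝ (⊤ : ℕ∞) u → HasCompactSupport u → tsupport u ⊆ Ω →
      ContDiff ℝ (⊤ : ℕ∞) v → HasCompactSupport v → tsupport v ⊆ Ω →
      0 < (∫ x in Ω, u x * v x ∂μ) → 0 ≤ weightedQuotient μ Ω x₀ a b u v)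
    ∧ (∀ δ : ℝ, 0 < δ → ∃ u v : E → ℝ,
      ContDiff ℝ (⊤ : ℕ∞) u ∧ HasCompactSupport u ∧ tsupport u ⊆ Ω ∧
      ContDiff ℝ (⊤ : ℕ∞) v ∧ HasCompactSupport v ∧ tsupport v ⊆ Ω ∧
      0 < (∫ x in Ω, u x * v x ∂μ) ∧ weightedQuotient μ Ω x₀ a b u v < δ) := by
  refine ⟨fun u v _ _ _ _ _ _ huv => weightedQuotient_nonneg hatpos hbtpos huv.le, fun δ hδ => ?_⟩
  obtain ⟨φ, -, hφc, hφ, -, hφ0⟩ :=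
    exists_contDiff_tsupport_subset (n := ⊤) (univ_mem (f := 𝓝 (0 : E)))
  have hφpos : 0 < ∫ y, φ y * φ y ∂μ :=
    (hφ.continuous.mul hφ.continuous).integral_pos_of_hasCompactSupport_nonneg_nonzero
      hφc.mul_left (fun y => mul_self_nonneg (φ y)) (x := 0) (by simp [hφ0])
  obtain ⟨t, hlt, hsupp, ht⟩ := ((frequently_weightedQuotient_rescale_lt ha hb hao hbo hΩ
    (hφ.of_le (by simp)) hφc hφpos hδ).and_eventually <|
      (eventually_tsupport_rescale_subset hΩ hφc).and self_mem_nhdsWithin).exists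
  have hu : ContDiff ℝ (⊤ : ℕ∞) (rescale x₀ t φ) := contDiff_rescale hφ
  have huc : HasCompactSupport (rescale x₀ t φ) := hasCompactSupport_rescale ht.ne' hφc
  refine ⟨_, _, hu, huc, hsupp, hu, huc, hsupp, ?_, hlt⟩
  rw [setIntegral_rescale_mul_self ht hsupp]
  positivity

theorem stmt_16
    (N : ℕ) (hN : 1 ≤ N)
    (Ω : Set (EuclideanSpace ℝ (Fin N)))
    (hΩo : IsOpen Ω) (hΩb : Bornology.IsBounded Ω) (hΩne : Ω.Nonempty)
    (x₀ : EuclideanSpace ℝ (Fin N)) (hx₀ : x₀ ∈ Ω)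
    (a b : EuclideanSpace ℝ (Fin N) → ℝ)
    (ha : ContDiffOn ℝ 1 a Ω) (hb : ContDiffOn ℝ 1 b Ω)
    (k l A B : ℝ) (hA : 0 < A) (hB : 0 < B) (hk : 2 < k) (hl : 2 < l)
    (hexpa : Tendsto (fun x => (a x - a x₀ - A * ‖x - x₀‖ ^ k) / ‖x - x₀‖ ^ k)
      (𝓝[≠] x₀) (𝓝 0))
    (hexpb : Tendsto (fun x => (b x - b x₀ - B * ‖x - x₀‖ ^ l) / ‖x - x₀‖ ^ l)
      (𝓝[≠] x₀) (𝓝 0))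
    (hatpos : ∀ᵐ x ∂(volume.restrict Ω), 0 ≤ fderiv ℝ a x (x - x₀))
    (hbtpos : ∀ᵐ x ∂(volume.restrict Ω), 0 ≤ fderiv ℝ b x (x - x₀)) :
    (∀ u v : EuclideanSpace ℝ (Fin N) → ℝ,
      ContDiff ℝ (⊤ : ℕ∞) u → HasCompactSupport u → tsupport u ⊆ Ω →
      ContDiff ℝ (⊤ : ℕ∞) v → HasCompactSupport v → tsupport v ⊆ Ω →
      0 < (∫ x in Ω, u x * v x) →
      0 ≤ (1 / 4) * (∫ x in Ω,
            (fderiv ℝ a x (x - x₀) * ‖fderiv ℝ u x‖ ^ 2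
              + fderiv ℝ b x (x - x₀) * ‖fderiv ℝ v x‖ ^ 2))
          / ∫ x in Ω, u x * v x)
    ∧ (∀ δ : ℝ, 0 < δ → ∃ u v : EuclideanSpace ℝ (Fin N) → ℝ,
      ContDiff ℝ (⊤ : ℕ∞) u ∧ HasCompactSupport u ∧ tsupport u ⊆ Ω ∧
      ContDiff ℝ (⊤ : ℕ∞) v ∧ HasCompactSupport v ∧ tsupport v ⊆ Ω ∧
      0 < (∫ x in Ω, u x * v x) ∧
      (1 / 4) * (∫ x in Ω,
            (fderiv ℝ a x (x - x₀) * ‖fderiv ℝ u x‖ ^ 2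
              + fderiv ℝ b x (x - x₀) * ‖fderiv ℝ v x‖ ^ 2))
          / (∫ x in Ω, u x * v x) < δ) := by
  have hΩ := hΩo.mem_nhds hx₀
  exact stmt_16_general hΩ (ha.contDiffAt hΩ) (hb.contDiffAt hΩ)
    (isLittleO_norm_sub_pow_of_tendsto_rpow (mod_cast hk) hexpa)
    (isLittleO_norm_sub_pow_of_tendsto_rpow (mod_cast hl) hexpb) hatpos hbtpos
end
end

section
/- Let N ≥ 1 be an integer, Ω ⊂ ℝ^N a nonempty bounded open set, x₀ ∈ Ω, and a, b : ℝ^N → ℝ differentiable on Ω. Let 0 < k ≤ 2, 0 < l ≤ 2, A_k > 0 and B_l > 0, and assume kA_k|x−x₀|^k ≤ ã(x) and lB_l|x−x₀|^l ≤ b̃(x) for almost every x ∈ Ω. Then for every pair of smooth functions u, v compactly supported in Ω with ∫_Ω u v dx > 0, one has φ_{a,b}(u,v) ≥ (N²/16) · min(k A_k diam(Ω)^{k−2}, l B_l diam(Ω)^{l−2}), where diam(Ω) is the diameter of Ω. -/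
open MeasureTheory Real Filter Topology

noncomputable section

/-! The radial derivative `∂ᵣa(x) = ∇a(x)·(x - x₀)` is the derivative of `a` along the flow
`x ↦ x₀ + eˢ (x - x₀)` of a field of divergence `d = dim E`. Integrating the divergence of
`u² (x - x₀)` gives `∫ u ∂ᵣu = -(d/2) ∫ u²`, and expanding `0 ≤ ∫ (2 ∂ᵣu + d u)²` turns this into
the Hardy-type inequality `d² ∫ u² ≤ 4 ∫ (∂ᵣu)²`. Since `R^(k-2) r² ≤ r^k` for `r ≤ R` and `k ≤ 2`,
both weights dominate the same multiple of `‖x - x₀‖²`; adding the inequalities for `u` and `v` and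
using `2uv ≤ u² + v²` yields the bound.

As `a` is only differentiable, the integrability of `∂ᵣa` on compact sets is not automatic:
nonnegativity almost everywhere makes `a` monotone along almost every flow line, so `∂ᵣa` is
integrable there, with integral a difference of values of `a`; by Fubini `∂ᵣa` composed with the
flow at some time is integrable, and the flow scales the measure by a constant. -/

open Module Set

section RealLine

variable {f g : ℝ → ℝ} {p q : ℝ}

lemma monotoneOn_Icc_of_hasDerivAt_of_ae_nonneg
    (hf : ∀ t ∈ Icc p q, HasDerivAt f (g t) t)
    (hg : ∀ᵐ t ∂volume.restrict (Icc p q), 0 ≤ g t) : MonotoneOn f (Icc p q) := by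
  intro s hs t ht hst
  have hsub : Icc s t ⊆ Icc p q := Icc_subset_Icc hs.1 ht.2
  have hneg_part : (fun y ↦ max (-g y) 0) =ᵐ[volume.restrict (Icc s t)] 0 := by
    filter_upwards [ae_restrict_of_ae_restrict_of_subset hsub hg] with y hy
    simpa using hy
  have hle : -f t - -f s ≤ ∫ y in s..t, max (-g y) 0 :=
    intervalIntegral.sub_le_integral_of_hasDeriv_right_of_le hst
      (fun y hy ↦ (hf y (hsub hy)).continuousAt.continuousWithinAt.neg)
      (fun y hy ↦ (hf y (hsub (Ioo_subset_Icc_self hy))).neg.hasDerivWithinAt)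
      ((integrable_congr hneg_part).2 (integrable_zero _ _ _))
      (fun y _ ↦ le_max_left _ _)
  have hzero : ∫ y in s..t, max (-g y) 0 = 0 := by
    rw [intervalIntegral.integral_of_le hst, ← integral_Icc_eq_integral_Ioc,
      integral_congr_ae hneg_part]
    simp
  linarith

lemma integrableOn_Icc_of_hasDerivAt_of_ae_nonneg (hpq : p ≤ q)
    (hf : ∀ t ∈ Icc p q, HasDerivAt f (g t) t)
    (hg : ∀ᵐ t ∂volume.restrict (Icc p q), 0 ≤ g t) : IntegrableOn g (Icc p q) := by
  have hmono : MonotoneOn f (uIcc p q) := by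
    rw [uIcc_of_le hpq]
    exact monotoneOn_Icc_of_hasDerivAt_of_ae_nonneg hf hg
  have hderiv : IntegrableOn (deriv f) (Icc p q) :=
    (intervalIntegrable_iff_integrableOn_Icc_of_le hpq).1 hmono.intervalIntegrable_deriv
  exact hderiv.congr_fun (fun t ht ↦ (hf t ht).deriv) measurableSet_Icc

lemma setIntegral_Icc_eq_sub_of_hasDerivAt_of_ae_nonneg (hpq : p ≤ q)
    (hf : ∀ t ∈ Icc p q, HasDerivAt f (g t) t)
    (hg : ∀ᵐ t ∂volume.restrict (Icc p q), 0 ≤ g t) : ∫ t in Icc p q, g t = f q - f p := by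
  rw [integral_Icc_eq_integral_Ioc, ← intervalIntegral.integral_of_le hpq]
  refine intervalIntegral.integral_eq_sub_of_hasDerivAt (by rwa [uIcc_of_le hpq]) ?_
  exact (intervalIntegrable_iff_integrableOn_Icc_of_le hpq).2
    (integrableOn_Icc_of_hasDerivAt_of_ae_nonneg hpq hf hg)

end RealLine

lemma rpow_sub_two_mul_sq_le_rpow {r R k : ℝ} (hr : 0 ≤ r) (hrR : r ≤ R) (hk : k ≤ 2) :
    R ^ (k - 2) * r ^ 2 ≤ r ^ k := by
  rcases hr.eq_or_lt with rfl | hr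
  · simpa using Real.rpow_nonneg le_rfl k
  · calc R ^ (k - 2) * r ^ 2 ≤ r ^ (k - 2) * r ^ 2 := by
          gcongr ?_ * _
          exact Real.rpow_le_rpow_of_nonpos hr hrR (by linarith)
      _ = r ^ k := by rw [← Real.rpow_natCast, ← Real.rpow_add hr]; norm_num

section CompactSupport

variable {X : Type*} [TopologicalSpace X]

lemma hasCompactSupport_sq {f : X → ℝ} (hfs : HasCompactSupport f) :
    HasCompactSupport fun x ↦ f x ^ 2 :=
  hfs.comp_left (g := fun y : ℝ ↦ y ^ 2) (zero_pow two_ne_zero)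

variable [MeasurableSpace X] [OpensMeasurableSpace X] {μ : Measure X} [IsFiniteMeasureOnCompacts μ]
  {f g : X → ℝ}

lemma integrable_sq_of_hasCompactSupport (hf : Continuous f) (hfs : HasCompactSupport f) :
    Integrable (fun x ↦ f x ^ 2) μ :=
  Continuous.integrable_of_hasCompactSupport (by fun_prop) (hasCompactSupport_sq hfs)

lemma two_mul_setIntegral_mul_le (s : Set X) (hf : Continuous f) (hfs : HasCompactSupport f)
    (hg : Continuous g) (hgs : HasCompactSupport g) :
    2 * ∫ x in s, f x * g x ∂μ ≤ ∫ x in s, f x ^ 2 ∂μ + ∫ x in s, g x ^ 2 ∂μ := by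
  have hfg : Integrable (fun x ↦ f x * g x) μ :=
    (hf.mul hg).integrable_of_hasCompactSupport hfs.mul_right
  have hf2 : Integrable (fun x ↦ f x ^ 2) μ := integrable_sq_of_hasCompactSupport hf hfs
  have hg2 : Integrable (fun x ↦ g x ^ 2) μ := integrable_sq_of_hasCompactSupport hg hgs
  rw [← integral_const_mul, ← integral_add hf2.integrableOn hg2.integrableOn]
  refine integral_mono (hfg.integrableOn.const_mul 2) (hf2.add hg2).integrableOn fun x ↦ ?_
  exact (mul_assoc _ _ _).symm.trans_le (two_mul_le_add_sq (f x) (g x))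

end CompactSupport

section Flow

variable {E : Type*} [NormedAddCommGroup E] [NormedSpace ℝ E]

/-- The derivative `∇a(x)·(x - x₀)` of `a` along the radial vector field centred at `x₀`, written
`ã` when `x₀` is understood. It takes the junk value `0` where `a` is not differentiable. -/
def radialDeriv (x₀ : E) (a : E → ℝ) (x : E) : ℝ := fderiv ℝ a x (x - x₀)

/-- The time-`s` flow of the radial vector field `x ↦ x - x₀`, as a homeomorphism. Exponential
time makes `radialDeriv x₀ a` exactly the derivative of `a` along flow lines. -/
@[simps]
def radialFlow (x₀ : E) (s : ℝ) : E ≃ₜ E where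
  toFun x := x₀ + exp s • (x - x₀)
  invFun x := x₀ + exp (-s) • (x - x₀)
  left_inv x := by simp [smul_smul, ← Real.exp_add]
  right_inv x := by simp [smul_smul, ← Real.exp_add]
  continuous_toFun := by fun_prop
  continuous_invFun := by fun_prop

lemma continuous_radialFlow (x₀ : E) : Continuous fun z : E × ℝ ↦ radialFlow x₀ z.2 z.1 := by
  simp only [radialFlow_apply]
  fun_prop

lemma hasDerivAt_comp_radialFlow {x₀ x : E} {a : E → ℝ} {s : ℝ}
    (ha : DifferentiableAt ℝ a (radialFlow x₀ s x)) :
    HasDerivAt (fun t ↦ a (radialFlow x₀ t x)) (radialDeriv x₀ a (radialFlow x₀ s x)) s := by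
  have hflow : HasDerivAt (fun t ↦ radialFlow x₀ t x) (radialFlow x₀ s x - x₀) s := by
    simpa using ((Real.hasDerivAt_exp s).smul_const (x - x₀)).const_add x₀
  exact ha.hasFDerivAt.comp_hasDerivAt s hflow

lemma eventually_mapsTo_radialFlow (x₀ : E) {K U : Set E} (hK : IsCompact K) (hU : IsOpen U)
    (hKU : K ⊆ U) : ∀ᶠ s in 𝓝 (0 : ℝ), MapsTo (radialFlow x₀ s) K U := by
  refine hK.eventually_forall_of_forall_eventually fun x hx ↦ ?_
  have hcont : Continuous fun z : ℝ × E ↦ radialFlow x₀ z.1 z.2 :=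
    (continuous_radialFlow x₀).comp continuous_swap
  exact hcont.continuousAt.eventually_mem (hU.mem_nhds (by simpa using hKU hx))

section Measure

variable [FiniteDimensional ℝ E] [MeasurableSpace E] [BorelSpace E]

lemma measurable_radialDeriv (x₀ : E) (a : E → ℝ) : Measurable (radialDeriv x₀ a) :=
  isBoundedBilinearMap_apply.continuous.measurable.comp
    ((measurable_fderiv ℝ a).prodMk (measurable_id.sub_const x₀))

variable (μ : Measure E) [μ.IsAddHaarMeasure]

lemma map_radialFlow (x₀ : E) (s : ℝ) :
    μ.map (radialFlow x₀ s) = ENNReal.ofReal (exp s ^ finrank ℝ E)⁻¹ • μ := by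
  have hcomp : ⇑(radialFlow x₀ s) = (x₀ + ·) ∘ (exp s • ·) ∘ (· - x₀) := rfl
  rw [hcomp, ← Measure.map_map (by fun_prop) (by fun_prop),
    ← Measure.map_map (by fun_prop) (by fun_prop), (measurePreserving_sub_right μ x₀).map_eq,
    Measure.map_addHaar_smul μ (exp_ne_zero s), Measure.map_smul,
    (measurePreserving_add_left μ x₀).map_eq, abs_of_pos (by positivity)]

lemma quasiMeasurePreserving_radialFlow (x₀ : E) (s : ℝ) :
    Measure.QuasiMeasurePreserving (radialFlow x₀ s) μ μ := by
  refine ⟨(radialFlow x₀ s).measurable, ?_⟩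
  rw [map_radialFlow]
  exact Measure.smul_absolutelyContinuous

variable {μ}

lemma integrableOn_comp_radialFlow_iff {x₀ : E} {s : ℝ} {f : E → ℝ} {K : Set E} :
    IntegrableOn (f ∘ radialFlow x₀ s) (radialFlow x₀ s ⁻¹' K) μ ↔ IntegrableOn f K μ := by
  rw [← (radialFlow x₀ s).measurableEmbedding.integrableOn_map_iff, map_radialFlow, IntegrableOn,
    Measure.restrict_smul, integrable_smul_measure _ ENNReal.ofReal_ne_top, IntegrableOn]
  exact (ENNReal.ofReal_pos.2 (by positivity)).ne'

lemma ae_ae_radialFlow {x₀ : E} {Ω L : Set E} {I : Set ℝ} {p : E → Prop}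
    (hΩ : MeasurableSet Ω) (hL : MeasurableSet L) (hI : MeasurableSet I)
    (hLΩ : ∀ s ∈ I, MapsTo (radialFlow x₀ s) L Ω)
    (hp : MeasurableSet {x | p x}) (hpΩ : ∀ᵐ x ∂μ.restrict Ω, p x) :
    ∀ᵐ x ∂μ.restrict L, ∀ᵐ s ∂volume.restrict I, p (radialFlow x₀ s x) := by
  have hmeas : MeasurableSet {z : E × ℝ | p (radialFlow x₀ z.2 z.1)} :=
    (continuous_radialFlow x₀).measurable hp
  rw [Measure.ae_ae_comm (p := fun x s ↦ p (radialFlow x₀ s x)) hmeas]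
  rw [ae_restrict_iff' hΩ] at hpΩ
  filter_upwards [ae_restrict_mem hI] with s hs
  filter_upwards [ae_restrict_of_ae ((quasiMeasurePreserving_radialFlow μ x₀ s).ae hpΩ),
    ae_restrict_mem hL] with x hx hxL
  exact hx (hLΩ s hs hxL)

lemma integrable_radialDeriv_radialFlow {x₀ : E} {Ω L : Set E} {a : E → ℝ} {δ : ℝ} (hδ : 0 ≤ δ)
    (hΩ : IsOpen Ω) (ha : DifferentiableOn ℝ a Ω)
    (hnonneg : ∀ᵐ x ∂μ.restrict Ω, 0 ≤ radialDeriv x₀ a x) (hL : IsCompact L)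
    (hLΩ : ∀ s ∈ Icc 0 δ, MapsTo (radialFlow x₀ s) L Ω) :
    Integrable (fun z : E × ℝ ↦ radialDeriv x₀ a (radialFlow x₀ z.2 z.1))
      ((μ.restrict L).prod (volume.restrict (Icc 0 δ))) := by
  have hmeas : Measurable fun z : E × ℝ ↦ radialDeriv x₀ a (radialFlow x₀ z.2 z.1) :=
    (measurable_radialDeriv x₀ a).comp (continuous_radialFlow x₀).measurable
  have hnonneg_flow : ∀ᵐ x ∂μ.restrict L, ∀ᵐ s ∂volume.restrict (Icc 0 δ),
      0 ≤ radialDeriv x₀ a (radialFlow x₀ s x) :=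
    ae_ae_radialFlow (p := (0 ≤ radialDeriv x₀ a ·)) hΩ.measurableSet hL.measurableSet
      measurableSet_Icc hLΩ (measurableSet_le measurable_const (measurable_radialDeriv x₀ a))
      hnonneg
  have hderiv : ∀ x ∈ L, ∀ s ∈ Icc 0 δ, HasDerivAt (fun t ↦ a (radialFlow x₀ t x))
      (radialDeriv x₀ a (radialFlow x₀ s x)) s := fun x hx s hs ↦
    hasDerivAt_comp_radialFlow (ha.differentiableAt (hΩ.mem_nhds (hLΩ s hs hx)))
  have hslice : ∀ s ∈ Icc 0 δ, IntegrableOn (fun x ↦ a (radialFlow x₀ s x)) L μ := fun s hs ↦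
    (ha.continuousOn.comp (radialFlow x₀ s).continuous.continuousOn
      (hLΩ s hs)).integrableOn_compact hL
  refine (integrable_prod_iff hmeas.aestronglyMeasurable).2 ⟨?_, ?_⟩
  · filter_upwards [hnonneg_flow, ae_restrict_mem hL.measurableSet] with x hx hxL
    exact integrableOn_Icc_of_hasDerivAt_of_ae_nonneg hδ (hderiv x hxL) hx
  · have hends : IntegrableOn (fun x ↦ a (radialFlow x₀ δ x) - a (radialFlow x₀ 0 x)) L μ :=
      (hslice δ ⟨hδ, le_rfl⟩).sub (hslice 0 ⟨le_rfl, hδ⟩)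
    refine Integrable.congr hends ?_
    filter_upwards [hnonneg_flow, ae_restrict_mem hL.measurableSet] with x hx hxL
    have hnorm : (fun s ↦ ‖radialDeriv x₀ a (radialFlow x₀ s x)‖) =ᵐ[volume.restrict (Icc 0 δ)]
        fun s ↦ radialDeriv x₀ a (radialFlow x₀ s x) := by
      filter_upwards [hx] with s hs using Real.norm_of_nonneg hs
    rw [integral_congr_ae hnorm]
    exact (setIntegral_Icc_eq_sub_of_hasDerivAt_of_ae_nonneg hδ (hderiv x hxL) hx).symm

theorem integrableOn_radialDeriv_of_isCompact {x₀ : E} {Ω K : Set E} {a : E → ℝ} (hΩ : IsOpen Ω)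
    (ha : DifferentiableOn ℝ a Ω) (hnonneg : ∀ᵐ x ∂μ.restrict Ω, 0 ≤ radialDeriv x₀ a x)
    (hK : IsCompact K) (hKΩ : K ⊆ Ω) : IntegrableOn (radialDeriv x₀ a) K μ := by
  obtain ⟨L, hL, hKL, hLΩ⟩ := exists_compact_between hK hΩ hKΩ
  have hforward := eventually_mapsTo_radialFlow x₀ hL hΩ hLΩ
  have hbackward : ∀ᶠ s in 𝓝 (0 : ℝ), MapsTo (radialFlow x₀ (-s)) K (interior L) :=
    (continuous_neg.tendsto' (0 : ℝ) 0 neg_zero).eventually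
      (eventually_mapsTo_radialFlow x₀ hK isOpen_interior hKL)
  obtain ⟨δ, hδ, hflow⟩ := mem_nhdsGE_iff_exists_Icc_subset.1
    (mem_nhdsWithin_of_mem_nhds (hforward.and hbackward))
  have hprod : Integrable (fun z : E × ℝ ↦ radialDeriv x₀ a (radialFlow x₀ z.2 z.1))
      ((μ.restrict L).prod (volume.restrict (Icc 0 δ))) :=
    integrable_radialDeriv_radialFlow (le_of_lt hδ) hΩ ha hnonneg hL fun s hs ↦ (hflow hs).1
  have : NeBot (ae (volume.restrict (Icc 0 δ))) := by
    rw [ae_neBot, Ne, Measure.restrict_eq_zero]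
    simpa using hδ
  obtain ⟨s, hint, hs⟩ := (hprod.prod_left_ae.and (ae_restrict_mem measurableSet_Icc)).exists
  refine integrableOn_comp_radialFlow_iff.1 (IntegrableOn.mono_set (t := L) hint fun x hx ↦ ?_)
  have hreturn : radialFlow x₀ (-s) (radialFlow x₀ s x) = x := (radialFlow x₀ s).left_inv x
  exact hreturn ▸ interior_subset ((hflow hs).2 hx)

end Measure

section Hardy

variable {x₀ : E} {w u : E → ℝ}

lemma continuous_radialDeriv (hw : ContDiff ℝ 1 w) : Continuous (radialDeriv x₀ w) :=
  (hw.continuous_fderiv one_ne_zero).clm_apply (continuous_id.sub continuous_const)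

lemma hasCompactSupport_radialDeriv (hws : HasCompactSupport w) :
    HasCompactSupport (radialDeriv x₀ w) :=
  hws.mono' fun x hx ↦ support_fderiv_subset ℝ fun hzero ↦ hx (by simp [radialDeriv, hzero])

lemma radialDeriv_sq {x : E} (hu : DifferentiableAt ℝ u x) :
    radialDeriv x₀ (fun y ↦ u y ^ 2) x = 2 * (u x * radialDeriv x₀ u x) := by
  simp [radialDeriv, (hu.hasFDerivAt.pow 2).fderiv, mul_assoc]

lemma radialDeriv_sq_le (x₀ : E) (u : E → ℝ) (x : E) :
    radialDeriv x₀ u x ^ 2 ≤ ‖x - x₀‖ ^ 2 * ‖fderiv ℝ u x‖ ^ 2 := by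
  rw [← mul_pow, mul_comm, ← sq_abs]
  exact pow_le_pow_left₀ (abs_nonneg _) ((fderiv ℝ u x).le_opNorm _) 2

lemma radialDeriv_eq_sum_coord [FiniteDimensional ℝ E] {ι : Type*} [Fintype ι] (b : Basis ι ℝ E)
    (x : E) : radialDeriv x₀ w x =
      ∑ i, LinearMap.toContinuousLinearMap (b.coord i) (x - x₀) * fderiv ℝ w x (b i) := by
  simp only [radialDeriv, LinearMap.coe_toContinuousLinearMap', Basis.coord_apply]
  conv_lhs => rw [← b.sum_repr (x - x₀), map_sum]
  simp only [map_smul, smul_eq_mul]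

variable [MeasurableSpace E] [BorelSpace E] {μ : Measure E}

lemma integrable_clm_sub_mul_fderiv [IsFiniteMeasureOnCompacts μ] (ℓ : E →L[ℝ] ℝ) (v : E)
    (hw : ContDiff ℝ 1 w) (hws : HasCompactSupport w) :
    Integrable (fun x ↦ ℓ (x - x₀) * fderiv ℝ w x v) μ := by
  have : Continuous (fderiv ℝ w) := hw.continuous_fderiv one_ne_zero
  have hcont : Continuous fun x ↦ ℓ (x - x₀) * fderiv ℝ w x v := by fun_prop
  exact hcont.integrable_of_hasCompactSupport (hws.fderiv_apply ℝ v).mul_left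

variable [FiniteDimensional ℝ E] [μ.IsAddHaarMeasure]

lemma integral_clm_sub_mul_fderiv (ℓ : E →L[ℝ] ℝ) (v : E) (hw : ContDiff ℝ 1 w)
    (hws : HasCompactSupport w) :
    ∫ x, ℓ (x - x₀) * fderiv ℝ w x v ∂μ = -(ℓ v * ∫ x, w x ∂μ) := by
  have hℓ : ∀ x, fderiv ℝ (fun y ↦ ℓ (y - x₀)) x = ℓ := fun x ↦
    (ℓ.hasFDerivAt.comp x ((hasFDerivAt_id x).sub_const x₀)).fderiv
  have hwc : Continuous w := hw.continuous
  have hcont : Continuous fun x ↦ ℓ (x - x₀) * w x := by fun_prop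
  have hint : Integrable w μ := hwc.integrable_of_hasCompactSupport hws
  rw [integral_mul_fderiv_eq_neg_fderiv_mul_of_integrable
    (by simpa only [hℓ] using hint.const_mul _)
    (integrable_clm_sub_mul_fderiv ℓ v hw hws)
    (hcont.integrable_of_hasCompactSupport hws.mul_left)
    (fun x _ ↦ by fun_prop) (fun x _ ↦ (hw.differentiable one_ne_zero) x)]
  simp only [hℓ, integral_const_mul]

theorem integral_radialDeriv (x₀ : E) (hw : ContDiff ℝ 1 w) (hws : HasCompactSupport w) :
    ∫ x, radialDeriv x₀ w x ∂μ = -(finrank ℝ E * ∫ x, w x ∂μ) := by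
  simp only [radialDeriv_eq_sum_coord (finBasis ℝ E)]
  rw [integral_finsetSum _ fun i _ ↦ integrable_clm_sub_mul_fderiv _ _ hw hws]
  simp_rw [integral_clm_sub_mul_fderiv _ _ hw hws]
  simp

theorem sq_finrank_mul_integral_sq_le (x₀ : E) (hu : ContDiff ℝ 1 u) (hus : HasCompactSupport u) :
    (finrank ℝ E : ℝ) ^ 2 * ∫ x, u x ^ 2 ∂μ ≤ 4 * ∫ x, radialDeriv x₀ u x ^ 2 ∂μ := by
  set d : ℝ := (finrank ℝ E : ℝ)
  have huc : Continuous u := hu.continuous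
  have hrc : Continuous (radialDeriv x₀ u) := continuous_radialDeriv hu
  have hint_sq : Integrable (fun x ↦ u x ^ 2) μ := integrable_sq_of_hasCompactSupport huc hus
  have hint_mul : Integrable (fun x ↦ u x * radialDeriv x₀ u x) μ :=
    (huc.mul hrc).integrable_of_hasCompactSupport hus.mul_right
  have hint_rsq : Integrable (fun x ↦ radialDeriv x₀ u x ^ 2) μ :=
    integrable_sq_of_hasCompactSupport hrc (hasCompactSupport_radialDeriv hus)
  have hparts : 2 * ∫ x, u x * radialDeriv x₀ u x ∂μ = -(d * ∫ x, u x ^ 2 ∂μ) := by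
    rw [← integral_radialDeriv x₀ (hu.pow 2) (hasCompactSupport_sq hus), ← integral_const_mul]
    simp only [radialDeriv_sq (hu.differentiable one_ne_zero _)]
  have hexpand : ∫ x, (2 * radialDeriv x₀ u x + d * u x) ^ 2 ∂μ =
      4 * ∫ x, radialDeriv x₀ u x ^ 2 ∂μ + 4 * d * ∫ x, u x * radialDeriv x₀ u x ∂μ +
        d ^ 2 * ∫ x, u x ^ 2 ∂μ := by
    rw [← integral_const_mul, ← integral_const_mul, ← integral_const_mul,
      ← integral_add (hint_rsq.const_mul 4) (hint_mul.const_mul (4 * d)),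
      ← integral_add (by exact (hint_rsq.const_mul 4).add (hint_mul.const_mul (4 * d)))
        (hint_sq.const_mul (d ^ 2))]
    congr 1 with x
    ring
  have hsq_nonneg : 0 ≤ ∫ x, (2 * radialDeriv x₀ u x + d * u x) ^ 2 ∂μ :=
    integral_nonneg fun x ↦ sq_nonneg _
  linear_combination hsq_nonneg + hexpand + 2 * d * hparts

lemma integrableOn_radialDeriv_mul_norm_fderiv_sq {Ω : Set E} {a : E → ℝ} (hΩ : IsOpen Ω)
    (ha : DifferentiableOn ℝ a Ω) (hnonneg : ∀ᵐ x ∂μ.restrict Ω, 0 ≤ radialDeriv x₀ a x)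
    (hu : ContDiff ℝ 1 u) (hus : HasCompactSupport u) (huΩ : tsupport u ⊆ Ω) :
    IntegrableOn (fun x ↦ radialDeriv x₀ a x * ‖fderiv ℝ u x‖ ^ 2) Ω μ := by
  have hcont : Continuous fun x ↦ ‖fderiv ℝ u x‖ ^ 2 :=
    (hu.continuous_fderiv one_ne_zero).norm.pow 2
  have htsupport : IntegrableOn (fun x ↦ radialDeriv x₀ a x * ‖fderiv ℝ u x‖ ^ 2) (tsupport u) μ :=
    (integrableOn_radialDeriv_of_isCompact hΩ ha hnonneg hus huΩ).mul_continuousOn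
      hcont.continuousOn hus
  refine htsupport.of_forall_sdiff_eq_zero hΩ.measurableSet fun x hx ↦ ?_
  simp [fderiv_of_notMem_tsupport ℝ hx.2]

theorem mul_setIntegral_sq_le_of_mul_norm_sub_sq_le {Ω : Set E} {C : ℝ}
    (hC : 0 ≤ C) (hCw : ∀ᵐ x ∂μ.restrict Ω, C * ‖x - x₀‖ ^ 2 ≤ w x)
    (hu : ContDiff ℝ 1 u) (hus : HasCompactSupport u) (huΩ : tsupport u ⊆ Ω)
    (hint : IntegrableOn (fun x ↦ w x * ‖fderiv ℝ u x‖ ^ 2) Ω μ) :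
    C * (finrank ℝ E : ℝ) ^ 2 / 4 * ∫ x in Ω, u x ^ 2 ∂μ ≤
      ∫ x in Ω, w x * ‖fderiv ℝ u x‖ ^ 2 ∂μ := by
  have hint_rsq : Integrable (fun x ↦ radialDeriv x₀ u x ^ 2) μ :=
    integrable_sq_of_hasCompactSupport (continuous_radialDeriv hu)
      (hasCompactSupport_radialDeriv hus)
  have hglobal_sq : ∫ x in Ω, u x ^ 2 ∂μ = ∫ x, u x ^ 2 ∂μ :=
    setIntegral_eq_integral_of_forall_compl_eq_zero fun x hx ↦ by
      simp [image_eq_zero_of_notMem_tsupport fun h ↦ hx (huΩ h)]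
  have hglobal_rsq : ∫ x in Ω, radialDeriv x₀ u x ^ 2 ∂μ = ∫ x, radialDeriv x₀ u x ^ 2 ∂μ :=
    setIntegral_eq_integral_of_forall_compl_eq_zero fun x hx ↦ by
      simp [radialDeriv, fderiv_of_notMem_tsupport ℝ fun h ↦ hx (huΩ h)]
  calc C * (finrank ℝ E : ℝ) ^ 2 / 4 * ∫ x in Ω, u x ^ 2 ∂μ
      = C / 4 * ((finrank ℝ E : ℝ) ^ 2 * ∫ x, u x ^ 2 ∂μ) := by rw [hglobal_sq]; ring
    _ ≤ C / 4 * (4 * ∫ x, radialDeriv x₀ u x ^ 2 ∂μ) := by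
        gcongr ?_ * ?_; exact sq_finrank_mul_integral_sq_le x₀ hu hus
    _ = ∫ x in Ω, C * radialDeriv x₀ u x ^ 2 ∂μ := by
        rw [integral_const_mul, hglobal_rsq]; ring
    _ ≤ ∫ x in Ω, w x * ‖fderiv ℝ u x‖ ^ 2 ∂μ := by
        refine integral_mono_ae (hint_rsq.integrableOn.const_mul C) hint ?_
        filter_upwards [hCw] with x hx
        calc C * radialDeriv x₀ u x ^ 2 ≤ C * (‖x - x₀‖ ^ 2 * ‖fderiv ℝ u x‖ ^ 2) := by
              gcongr; exact radialDeriv_sq_le x₀ u x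
          _ = C * ‖x - x₀‖ ^ 2 * ‖fderiv ℝ u x‖ ^ 2 := (mul_assoc _ _ _).symm
          _ ≤ w x * ‖fderiv ℝ u x‖ ^ 2 := by gcongr

theorem mul_setIntegral_mul_le_setIntegral_radialDeriv_mul_add {v a b : E → ℝ} {Ω : Set E} {m : ℝ}
    (hΩ : IsOpen Ω) (ha : DifferentiableOn ℝ a Ω) (hb : DifferentiableOn ℝ b Ω) (hm : 0 ≤ m)
    (hma : ∀ᵐ x ∂μ.restrict Ω, m * ‖x - x₀‖ ^ 2 ≤ radialDeriv x₀ a x)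
    (hmb : ∀ᵐ x ∂μ.restrict Ω, m * ‖x - x₀‖ ^ 2 ≤ radialDeriv x₀ b x)
    (hu : ContDiff ℝ 1 u) (hus : HasCompactSupport u) (huΩ : tsupport u ⊆ Ω)
    (hv : ContDiff ℝ 1 v) (hvs : HasCompactSupport v) (hvΩ : tsupport v ⊆ Ω) :
    m * (finrank ℝ E : ℝ) ^ 2 / 2 * ∫ x in Ω, u x * v x ∂μ ≤
      ∫ x in Ω, (radialDeriv x₀ a x * ‖fderiv ℝ u x‖ ^ 2 +
        radialDeriv x₀ b x * ‖fderiv ℝ v x‖ ^ 2) ∂μ := by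
  have ha_nonneg : ∀ᵐ x ∂μ.restrict Ω, 0 ≤ radialDeriv x₀ a x :=
    hma.mono fun x hx ↦ le_trans (by positivity) hx
  have hb_nonneg : ∀ᵐ x ∂μ.restrict Ω, 0 ≤ radialDeriv x₀ b x :=
    hmb.mono fun x hx ↦ le_trans (by positivity) hx
  have hint_u := integrableOn_radialDeriv_mul_norm_fderiv_sq hΩ ha ha_nonneg hu hus huΩ
  have hint_v := integrableOn_radialDeriv_mul_norm_fderiv_sq hΩ hb hb_nonneg hv hvs hvΩ
  have hardy_u := mul_setIntegral_sq_le_of_mul_norm_sub_sq_le hm hma hu hus huΩ hint_u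
  have hardy_v := mul_setIntegral_sq_le_of_mul_norm_sub_sq_le hm hmb hv hvs hvΩ hint_v
  calc m * (finrank ℝ E : ℝ) ^ 2 / 2 * ∫ x in Ω, u x * v x ∂μ
      = m * (finrank ℝ E : ℝ) ^ 2 / 4 * (2 * ∫ x in Ω, u x * v x ∂μ) := by ring
    _ ≤ m * (finrank ℝ E : ℝ) ^ 2 / 4 * (∫ x in Ω, u x ^ 2 ∂μ + ∫ x in Ω, v x ^ 2 ∂μ) := by
        gcongr ?_ * ?_
        exact two_mul_setIntegral_mul_le Ω hu.continuous hus hv.continuous hvs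
    _ ≤ ∫ x in Ω, radialDeriv x₀ a x * ‖fderiv ℝ u x‖ ^ 2 ∂μ +
          ∫ x in Ω, radialDeriv x₀ b x * ‖fderiv ℝ v x‖ ^ 2 ∂μ := by linarith
    _ = _ := (integral_add hint_u hint_v).symm

end Hardy

end Flow

lemma ae_mul_norm_sub_sq_le_of_ae_mul_rpow_le {E : Type*} [NormedAddCommGroup E]
    [MeasurableSpace E] {μ : Measure E} {Ω : Set E} {x₀ : E} {w : E → ℝ} {c k m R : ℝ}
    (hΩ : MeasurableSet Ω) (hΩR : Ω ⊆ Metric.closedBall x₀ R) (hc : 0 ≤ c) (hk : k ≤ 2)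
    (hm : m ≤ c * R ^ (k - 2)) (hw : ∀ᵐ x ∂μ.restrict Ω, c * ‖x - x₀‖ ^ k ≤ w x) :
    ∀ᵐ x ∂μ.restrict Ω, m * ‖x - x₀‖ ^ 2 ≤ w x := by
  filter_upwards [hw, ae_restrict_mem hΩ] with x hx hxΩ
  calc m * ‖x - x₀‖ ^ 2 ≤ c * R ^ (k - 2) * ‖x - x₀‖ ^ 2 := by gcongr
    _ = c * (R ^ (k - 2) * ‖x - x₀‖ ^ 2) := mul_assoc _ _ _
    _ ≤ c * ‖x - x₀‖ ^ k := by
        gcongr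
        exact rpow_sub_two_mul_sq_le_rpow (norm_nonneg _) (mem_closedBall_iff_norm.1 (hΩR hxΩ)) hk
    _ ≤ w x := hx

theorem stmt_19_general {E : Type*} [NormedAddCommGroup E] [NormedSpace ℝ E]
    [FiniteDimensional ℝ E] [MeasurableSpace E] [BorelSpace E] (μ : Measure E) [μ.IsAddHaarMeasure]
    {Ω : Set E} (hΩ : IsOpen Ω) {x₀ : E} {R : ℝ} (hΩR : Ω ⊆ Metric.closedBall x₀ R) {a b : E → ℝ}
    (ha : DifferentiableOn ℝ a Ω) (hb : DifferentiableOn ℝ b Ω) {k l c d : ℝ} (hc : 0 ≤ c)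
    (hd : 0 ≤ d) (hk : k ≤ 2) (hl : l ≤ 2)
    (hca : ∀ᵐ x ∂μ.restrict Ω, c * ‖x - x₀‖ ^ k ≤ radialDeriv x₀ a x)
    (hdb : ∀ᵐ x ∂μ.restrict Ω, d * ‖x - x₀‖ ^ l ≤ radialDeriv x₀ b x) {u v : E → ℝ}
    (hu : ContDiff ℝ 1 u) (hus : HasCompactSupport u) (huΩ : tsupport u ⊆ Ω)
    (hv : ContDiff ℝ 1 v) (hvs : HasCompactSupport v) (hvΩ : tsupport v ⊆ Ω)
    (huv : 0 < ∫ x in Ω, u x * v x ∂μ) :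
    (finrank ℝ E : ℝ) ^ 2 / 8 * min (c * R ^ (k - 2)) (d * R ^ (l - 2)) ≤
      1 / 4 * (∫ x in Ω, (radialDeriv x₀ a x * ‖fderiv ℝ u x‖ ^ 2 +
        radialDeriv x₀ b x * ‖fderiv ℝ v x‖ ^ 2) ∂μ) / ∫ x in Ω, u x * v x ∂μ := by
  have hΩ_nonempty : Ω.Nonempty := by
    by_contra! hempty
    simp [hempty] at huv
  have hR : 0 ≤ R := Metric.nonempty_closedBall.1 (hΩ_nonempty.mono hΩR)
  have hmin : 0 ≤ min (c * R ^ (k - 2)) (d * R ^ (l - 2)) := by positivity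
  have hbound := mul_setIntegral_mul_le_setIntegral_radialDeriv_mul_add hΩ ha hb hmin
    (ae_mul_norm_sub_sq_le_of_ae_mul_rpow_le hΩ.measurableSet hΩR hc hk (min_le_left _ _) hca)
    (ae_mul_norm_sub_sq_le_of_ae_mul_rpow_le hΩ.measurableSet hΩR hd hl (min_le_right _ _) hdb)
    hu hus huΩ hv hvs hvΩ
  rw [le_div_iff₀ huv]
  linarith

theorem stmt_19
    (N : ℕ) (hN : 1 ≤ N)
    (Ω : Set (EuclideanSpace ℝ (Fin N)))
    (hΩo : IsOpen Ω) (hΩb : Bornology.IsBounded Ω) (hΩne : Ω.Nonempty)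
    (x₀ : EuclideanSpace ℝ (Fin N)) (hx₀ : x₀ ∈ Ω)
    (a b : EuclideanSpace ℝ (Fin N) → ℝ)
    (ha : DifferentiableOn ℝ a Ω) (hb : DifferentiableOn ℝ b Ω)
    (k l A B : ℝ) (hA : 0 < A) (hB : 0 < B)
    (hk0 : 0 < k) (hk2 : k ≤ 2) (hl0 : 0 < l) (hl2 : l ≤ 2)
    (hlowa : ∀ᵐ x ∂(volume.restrict Ω),
      k * A * ‖x - x₀‖ ^ k ≤ fderiv ℝ a x (x - x₀))
    (hlowb : ∀ᵐ x ∂(volume.restrict Ω),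
      l * B * ‖x - x₀‖ ^ l ≤ fderiv ℝ b x (x - x₀))
    (u v : EuclideanSpace ℝ (Fin N) → ℝ)
    (hu : ContDiff ℝ (⊤ : ℕ∞) u) (hus : HasCompactSupport u) (huΩ : tsupport u ⊆ Ω)
    (hv : ContDiff ℝ (⊤ : ℕ∞) v) (hvs : HasCompactSupport v) (hvΩ : tsupport v ⊆ Ω)
    (huv : 0 < (∫ x in Ω, u x * v x)) :
    (1 / 4) * (∫ x in Ω,
          (fderiv ℝ a x (x - x₀) * ‖fderiv ℝ u x‖ ^ 2
            + fderiv ℝ b x (x - x₀) * ‖fderiv ℝ v x‖ ^ 2))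
        / (∫ x in Ω, u x * v x)
      ≥ ((N : ℝ) ^ 2 / 16) *
        min (k * A * Metric.diam Ω ^ (k - 2)) (l * B * Metric.diam Ω ^ (l - 2)) := by
  refine le_trans ?_ (stmt_19_general volume hΩo
    (fun x hx ↦ Metric.dist_le_diam_of_mem hΩb hx hx₀) ha hb (by positivity) (by positivity) hk2 hl2
    hlowa hlowb (hu.of_le (mod_cast le_top)) hus huΩ (hv.of_le (mod_cast le_top)) hvs hvΩ huv)
  rw [finrank_euclideanSpace_fin]
  gcongr
  norm_num
end
end
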